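/- Let n ≥ 1, α > 0 and 1 < q ≤ 1 + α/n. Suppose the coefficients a_{ij} satisfy condition (8) with this α and some c > 0. Let u and v be functions continuous on [0,∞) × ℝⁿ and C¹ on S with |u|^q, |v|^q locally integrable, such that u is an entire weak solution on S of u_t ≥ Lu + |u|^{q−1}u (with arbitrary initial data u(0,·)) and v is an entire weak solution on S of v_t ≤ Lv + |v|^{q−1}v (with arbitrary initial data v(0,·)), and u ≥ v on S. Then u = v in S. -/

import Mathlib

open MeasureTheory Real

noncomputable section

/-- Euclidean space ℝⁿ. -/
abbrev Xn (n : ℕ) : Type := EuclideanSpace ℝ (Fin n)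

/-- Points of the half-space `S = (0,∞) × ℝⁿ`. -/
abbrev Pt (n : ℕ) : Type := ℝ × Xn n

/-- The half-space `S = (0,∞) × ℝⁿ`. -/
def halfSpace (n : ℕ) : Set (Pt n) := {p | 0 < p.1}

/-- Partial derivative in the time variable. -/
noncomputable def pdT {n : ℕ} (w : Pt n → ℝ) (p : Pt n) : ℝ :=
  fderiv ℝ w p (1, 0)

/-- Partial derivative in the space variable `x_j`. -/
noncomputable def pdX {n : ℕ} (w : Pt n → ℝ) (j : Fin n) (p : Pt n) : ℝ :=
  fderiv ℝ w p (0, EuclideanSpace.single j 1)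

/-- The odd power function `x ↦ |x|^{q-1} x`. -/
noncomputable def oddPow (q x : ℝ) : ℝ := |x| ^ (q - 1) * x

/-- Condition (8): `𝒜(R) ≤ c R^{2-α}` for all `R > 1`, expressed as an a.e. bound
on the majorant `A` over the region `{(t,x) : t > 0, R/2 < |x| < R}`. -/
def Cond8 {n : ℕ} (A : Pt n → ℝ) (α c : ℝ) : Prop :=
  ∀ R : ℝ, 1 < R →
    ∀ᵐ p ∂(volume.restrict
        {p : Pt n | 0 < p.1 ∧ R / 2 < ‖p.2‖ ∧ ‖p.2‖ < R}),
      A p ≤ c * R ^ (2 - α)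

/-- `u` is an entire weak solution of `u_t ≥ Lu + |u|^{q−1}u` in `S`. -/
def WeakSuperSol {n : ℕ} (a : Fin n → Fin n → Pt n → ℝ) (q : ℝ)
    (u : Pt n → ℝ) : Prop :=
  ∀ φ : Pt n → ℝ, ContDiff ℝ (⊤ : ℕ∞) φ → HasCompactSupport φ →
    tsupport φ ⊆ halfSpace n → (∀ p, 0 ≤ φ p) →
    0 ≤ ∫ p in halfSpace n,
        (pdT u p * φ p + ∑ i, ∑ j, a i j p * pdX φ i p * pdX u j p
          - oddPow q (u p) * φ p)

/-- `v` is an entire weak solution of `v_t ≤ Lv + |v|^{q−1}v` in `S`. -/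
def WeakSubSol {n : ℕ} (a : Fin n → Fin n → Pt n → ℝ) (q : ℝ)
    (v : Pt n → ℝ) : Prop :=
  ∀ φ : Pt n → ℝ, ContDiff ℝ (⊤ : ℕ∞) φ → HasCompactSupport φ →
    tsupport φ ⊆ halfSpace n → (∀ p, 0 ≤ φ p) →
    ∫ p in halfSpace n,
        (pdT v p * φ p + ∑ i, ∑ j, a i j p * pdX φ i p * pdX v j p
          - oddPow q (v p) * φ p) ≤ 0


/-! ### Locally bounded measurable functions on the half space -/

lemma isOpen_halfSpace (n : ℕ) : IsOpen (halfSpace n) :=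
  isOpen_lt continuous_const continuous_fst

lemma measurableSet_halfSpace (n : ℕ) : MeasurableSet (halfSpace n) :=
  (isOpen_halfSpace n).measurableSet

/-- Measurable and locally bounded functions on the half space. -/
def LB {n : ℕ} (F : Pt n → ℝ) : Prop :=
  AEStronglyMeasurable F (volume.restrict (halfSpace n)) ∧
    ∀ K : Set (Pt n), IsCompact K → K ⊆ halfSpace n → ∃ M, ∀ p ∈ K, |F p| ≤ M

lemma LB.of_continuousOn {n : ℕ} {F : Pt n → ℝ} (hF : ContinuousOn F (halfSpace n)) : LB F := by
  refine ⟨hF.aestronglyMeasurable (measurableSet_halfSpace n), fun K hK hKS => ?_⟩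
  obtain ⟨M, hM⟩ := hK.exists_bound_of_continuousOn (hF.mono hKS)
  exact ⟨M, fun p hp => by simpa using hM p hp⟩

lemma LB.add {n : ℕ} {F G : Pt n → ℝ} (hF : LB F) (hG : LB G) : LB (fun p => F p + G p) := by
  refine ⟨hF.1.add hG.1, fun K hK hKS => ?_⟩
  obtain ⟨M, hM⟩ := hF.2 K hK hKS
  obtain ⟨M', hM'⟩ := hG.2 K hK hKS
  exact ⟨M + M', fun p hp => (abs_add_le _ _).trans (add_le_add (hM p hp) (hM' p hp))⟩

lemma LB.mul {n : ℕ} {F G : Pt n → ℝ} (hF : LB F) (hG : LB G) : LB (fun p => F p * G p) := by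
  refine ⟨hF.1.mul hG.1, fun K hK hKS => ?_⟩
  obtain ⟨M, hM⟩ := hF.2 K hK hKS
  obtain ⟨M', hM'⟩ := hG.2 K hK hKS
  refine ⟨M * M', fun p hp => ?_⟩
  rw [abs_mul]
  exact mul_le_mul (hM p hp) (hM' p hp) (abs_nonneg _) ((abs_nonneg _).trans (hM p hp))

lemma LB.const {n : ℕ} (c : ℝ) : LB (fun _ : Pt n => c) :=
  LB.of_continuousOn continuousOn_const

lemma LB.neg {n : ℕ} {F : Pt n → ℝ} (hF : LB F) : LB (fun p => - F p) := by
  simpa using (LB.const (n := n) (-1)).mul hF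

lemma LB.sub {n : ℕ} {F G : Pt n → ℝ} (hF : LB F) (hG : LB G) : LB (fun p => F p - G p) := by
  simpa [sub_eq_add_neg] using hF.add hG.neg

lemma LB.sum {n : ℕ} {ι : Type*} (s : Finset ι) {F : ι → Pt n → ℝ} (hF : ∀ i, LB (F i)) :
    LB (fun p => ∑ i ∈ s, F i p) := by
  classical
  induction s using Finset.induction_on with
  | empty => simpa using LB.const (n := n) 0
  | insert i s hi ih => simpa [Finset.sum_insert hi] using (hF i).add ih

lemma LB.integrable {n : ℕ} {F : Pt n → ℝ} (hF : LB F) {K : Set (Pt n)} (hK : IsCompact K)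
    (hKS : K ⊆ halfSpace n) (h0 : ∀ p, p ∉ K → F p = 0) : IntegrableOn F (halfSpace n) := by
  obtain ⟨M, hM⟩ := hF.2 K hK hKS
  have h1 : IntegrableOn F K (volume.restrict (halfSpace n)) := by
    refine Measure.integrableOn_of_bounded (M := M) ?_ hF.1 ?_
    · exact ((Measure.restrict_apply_le _ _).trans_lt hK.measure_lt_top).ne
    · exact (ae_restrict_iff' hK.measurableSet).mpr (Filter.Eventually.of_forall hM)
  refine (integrableOn_iff_integrable_of_support_subset ?_).mp h1
  intro p hp
  by_contra hpK
  exact hp (h0 p hpK)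

lemma pdT_continuousOn {n : ℕ} {w : Pt n → ℝ} (hw : ContDiffOn ℝ 1 w (halfSpace n)) :
    ContinuousOn (pdT w) (halfSpace n) :=
  (hw.continuousOn_fderiv_of_isOpen (isOpen_halfSpace n) le_rfl).clm_apply continuousOn_const

lemma pdX_continuousOn {n : ℕ} {w : Pt n → ℝ} (hw : ContDiffOn ℝ 1 w (halfSpace n)) (i : Fin n) :
    ContinuousOn (pdX w i) (halfSpace n) :=
  (hw.continuousOn_fderiv_of_isOpen (isOpen_halfSpace n) le_rfl).clm_apply continuousOn_const

lemma pd_eq_zero_of_notMem {n : ℕ} {φ : Pt n → ℝ} {p : Pt n} (hp : p ∉ tsupport φ) :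
    φ p = 0 ∧ pdT φ p = 0 ∧ ∀ i, pdX φ i p = 0 := by
  have h2 : fderiv ℝ φ p = 0 := by
    have := (notMem_tsupport_iff_eventuallyEq.mp hp).fderiv_eq (𝕜 := ℝ)
    rw [this]
    exact fderiv_const_apply 0
  refine ⟨image_eq_zero_of_notMem_tsupport hp, ?_, fun i => ?_⟩
  · simp [pdT, h2]
  · simp [pdX, h2]

instance instHaarPt (n : ℕ) : (volume : Measure (Pt n)).IsAddHaarMeasure :=
  Measure.prod.instIsAddHaarMeasure (volume : Measure ℝ) (volume : Measure (Xn n))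

/-! ### Mollification -/

open scoped Convolution in
lemma exists_smooth_approx {n : ℕ} {φ : Pt n → ℝ} (hφ : ContDiff ℝ 1 φ)
    (hc : HasCompactSupport φ) (h0 : ∀ p, 0 ≤ φ p) {ε δ : ℝ} (hε : 0 < ε) (hδ : 0 < δ) :
    ∃ ψ : Pt n → ℝ, ContDiff ℝ (⊤ : ℕ∞) ψ ∧ (∀ p, 0 ≤ ψ p) ∧
      tsupport ψ ⊆ Metric.cthickening δ (tsupport φ) ∧
      (∀ p, |ψ p - φ p| ≤ ε) ∧ (∀ p, ‖fderiv ℝ ψ p - fderiv ℝ φ p‖ ≤ ε) := by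
  have huc : UniformContinuous φ := hc.uniformContinuous_of_continuous hφ.continuous
  have hdc : Continuous (fderiv ℝ φ) := hφ.continuous_fderiv one_ne_zero
  have hud : UniformContinuous (fderiv ℝ φ) :=
    (hc.fderiv ℝ).uniformContinuous_of_continuous hdc
  obtain ⟨r1, hr1, H1⟩ := Metric.uniformContinuous_iff.mp huc ε hε
  obtain ⟨r2, hr2, H2⟩ := Metric.uniformContinuous_iff.mp hud ε hε
  set r := min δ (min r1 r2) with hr
  have hrpos : 0 < r := lt_min hδ (lt_min hr1 hr2)
  let b : ContDiffBump (0 : Pt n) := ⟨r / 2, r, by positivity, by linarith⟩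
  have hfd : ∀ p, fderiv ℝ (b.normed volume ⋆[ContinuousLinearMap.lsmul ℝ ℝ, volume] φ) p
      = (b.normed volume ⋆[ContinuousLinearMap.lsmul ℝ ℝ, volume] (fderiv ℝ φ)) p := by
    intro p
    have := (hc.hasFDerivAt_convolution_right (ContinuousLinearMap.lsmul ℝ ℝ) (μ := volume)
      (f := b.normed volume) (b.continuous_normed.locallyIntegrable) hφ p).fderiv
    rw [this]
    congr 1
  refine ⟨b.normed volume ⋆[ContinuousLinearMap.lsmul ℝ ℝ, volume] φ, ?_, ?_, ?_, ?_, ?_⟩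
  · exact b.hasCompactSupport_normed.contDiff_convolution_left _ b.contDiff_normed
      hφ.continuous.locallyIntegrable
  · intro p
    refine integral_nonneg fun t => ?_
    simp only [ContinuousLinearMap.lsmul_apply, smul_eq_mul]
    exact mul_nonneg (b.nonneg_normed _) (h0 _)
  · refine closure_minimal ?_ Metric.isClosed_cthickening
    refine (support_convolution_subset _).trans ?_
    rw [b.support_normed_eq]
    rintro _ ⟨x, hx, y, hy, rfl⟩
    refine Metric.mem_cthickening_of_dist_le _ y _ _ (subset_tsupport _ hy) ?_
    have hx' : dist x 0 < r := hx
    simp only [dist_eq_norm, add_sub_cancel_right, sub_zero] at hx' ⊢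
    exact hx'.le.trans (min_le_left _ _)
  · intro p
    rw [← Real.dist_eq]
    refine b.dist_normed_convolution_le hφ.continuous.aestronglyMeasurable fun x hx => ?_
    exact (H1 (lt_of_lt_of_le hx ((min_le_right _ _).trans (min_le_left _ _)))).le
  · intro p
    rw [hfd, ← dist_eq_norm]
    refine b.dist_normed_convolution_le hdc.aestronglyMeasurable fun x hx => ?_
    exact (H2 (lt_of_lt_of_le hx ((min_le_right _ _).trans (min_le_right _ _)))).le

/-! ### The weak inequality for `C¹` test functions -/

/-- `C¹` nonnegative compactly supported test functions. -/
def TestC1 {n : ℕ} (φ : Pt n → ℝ) : Prop :=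
  ContDiff ℝ 1 φ ∧ HasCompactSupport φ ∧ tsupport φ ⊆ halfSpace n ∧ ∀ p, 0 ≤ φ p

/-- The bilinear form of the coefficients. -/
def QF {n : ℕ} (a : Fin n → Fin n → Pt n → ℝ) (p : Pt n) (ξ η : Fin n → ℝ) : ℝ :=
  ∑ i, ∑ j, a i j p * ξ i * η j

/-- The spatial gradient. -/
def gr {n : ℕ} (w : Pt n → ℝ) (p : Pt n) : Fin n → ℝ := fun i => pdX w i p

lemma norm_single_pt {n : ℕ} (i : Fin n) :
    ‖((0 : ℝ), (EuclideanSpace.single i (1 : ℝ) : Xn n))‖ ≤ 1 := by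
  simp [Prod.norm_def]

lemma extend_test {n : ℕ} {B0 : Pt n → ℝ} {B : Fin n → Pt n → ℝ} (hB0 : LB B0)
    (hB : ∀ i, LB (B i))
    (h : ∀ φ : Pt n → ℝ, ContDiff ℝ (⊤ : ℕ∞) φ → HasCompactSupport φ →
      tsupport φ ⊆ halfSpace n → (∀ p, 0 ≤ φ p) →
      0 ≤ ∫ p in halfSpace n, (B0 p * φ p + ∑ i, B i p * pdX φ i p))
    {φ : Pt n → ℝ} (hφ : TestC1 φ) :
    0 ≤ ∫ p in halfSpace n, (B0 p * φ p + ∑ i, B i p * pdX φ i p) := by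
  obtain ⟨h1, hc, hS, h0⟩ := hφ
  obtain ⟨δ, hδ, hδS⟩ := (show IsCompact (tsupport φ) from hc).exists_cthickening_subset_open
    (isOpen_halfSpace n) hS
  have hK : IsCompact (Metric.cthickening δ (tsupport φ)) := IsCompact.cthickening hc
  have hIntg : ∀ ψ : Pt n → ℝ, ContDiff ℝ 1 ψ → tsupport ψ ⊆ Metric.cthickening δ (tsupport φ) →
      IntegrableOn (fun p => B0 p * ψ p + ∑ i, B i p * pdX ψ i p) (halfSpace n) := by
    intro ψ hψ hψK
    refine LB.integrable (K := Metric.cthickening δ (tsupport φ)) ?_ hK hδS ?_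
    · refine (hB0.mul (LB.of_continuousOn hψ.continuous.continuousOn)).add (LB.sum _ fun i => ?_)
      exact (hB i).mul (LB.of_continuousOn (pdX_continuousOn hψ.contDiffOn i))
    · intro p hp
      obtain ⟨e1, -, e2⟩ := pd_eq_zero_of_notMem (fun h => hp (hψK h))
      simp [e1, e2]
  have habs : ∀ {F : Pt n → ℝ}, LB F → LB (fun p => |F p|) := by
    intro F hF
    refine ⟨hF.1.norm, fun K hK hKS => ?_⟩
    obtain ⟨M, hM⟩ := hF.2 K hK hKS
    exact ⟨M, fun p hp => by simpa using hM p hp⟩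
  set G : Pt n → ℝ := (Metric.cthickening δ (tsupport φ)).indicator
    (fun p => |B0 p| + ∑ i, |B i p|) with hG
  have hGi : IntegrableOn G (halfSpace n) := by
    refine LB.integrable (K := Metric.cthickening δ (tsupport φ)) ?_ hK hδS ?_
    · have hL : LB (fun p => |B0 p| + ∑ i, |B i p|) :=
        (habs hB0).add (LB.sum _ fun i => habs (hB i))
      refine ⟨hL.1.indicator hK.measurableSet, fun K hK hKS => ?_⟩
      obtain ⟨M, hM⟩ := hL.2 K hK hKS
      refine ⟨M, fun p hp => ?_⟩
      refine le_trans ?_ (hM p hp)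
      simp only [hG, Set.indicator]
      split_ifs
      · exact le_rfl
      · simp
    · intro p hp
      simp [hG, hp]
  have key : ∀ ε : ℝ, 0 < ε →
      0 ≤ (∫ p in halfSpace n, (B0 p * φ p + ∑ i, B i p * pdX φ i p))
        + ε * ∫ p in halfSpace n, G p := by
    intro ε hε
    obtain ⟨ψ, hψ, hψ0, hψK, hψ1, hψ2⟩ := exists_smooth_approx h1 hc h0 hε hδ
    have hψc : HasCompactSupport ψ := hK.of_isClosed_subset (isClosed_tsupport _) hψK
    have hψ' : ContDiff ℝ 1 ψ := hψ.of_le (by exact_mod_cast le_top)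
    refine (h ψ hψ hψc (hψK.trans hδS) hψ0).trans ?_
    rw [← integral_const_mul, ← integral_add
      (hIntg φ h1 (Metric.self_subset_cthickening _)) (hGi.const_mul ε)]
    refine integral_mono (hIntg ψ hψ' hψK) ((hIntg φ h1
      (Metric.self_subset_cthickening _)).add (hGi.const_mul ε)) fun p => ?_
    by_cases hp : p ∈ Metric.cthickening δ (tsupport φ)
    · have e : G p = |B0 p| + ∑ i, |B i p| := by simp [hG, hp]
      simp only [e, mul_add, Finset.mul_sum]
      have e1 : B0 p * ψ p ≤ B0 p * φ p + ε * |B0 p| := by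
        have h3 : B0 p * (ψ p - φ p) ≤ |B0 p| * ε := by
          refine (le_abs_self _).trans ?_
          rw [abs_mul]
          exact mul_le_mul_of_nonneg_left (hψ1 p) (abs_nonneg _)
        nlinarith
      have e2 : ∑ i, B i p * pdX ψ i p ≤ ∑ i, B i p * pdX φ i p + ∑ i, ε * |B i p| := by
        rw [← Finset.sum_add_distrib]
        refine Finset.sum_le_sum fun i _ => ?_
        have h4 : |pdX ψ i p - pdX φ i p| ≤ ε := by
          have := (fderiv ℝ ψ p - fderiv ℝ φ p).le_opNorm
            ((0 : ℝ), (EuclideanSpace.single i (1 : ℝ) : Xn n))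
          refine le_trans this ?_
          calc _ ≤ ε * 1 := mul_le_mul (hψ2 p) (norm_single_pt i) (norm_nonneg _) hε.le
            _ = ε := mul_one _
        have h3 : B i p * (pdX ψ i p - pdX φ i p) ≤ |B i p| * ε := by
          refine (le_abs_self _).trans ?_
          rw [abs_mul]
          exact mul_le_mul_of_nonneg_left h4 (abs_nonneg _)
        nlinarith
      linarith
    · obtain ⟨e1, -, e2⟩ := pd_eq_zero_of_notMem (fun h => hp (hψK h))
      obtain ⟨e3, -, e4⟩ := pd_eq_zero_of_notMem
        (fun h => hp (Metric.self_subset_cthickening (δ := δ) (tsupport φ) h))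
      simp [hG, hp, e1, e2, e3, e4]
  refine ge_of_tendsto (x := nhdsWithin (0 : ℝ) (Set.Ioi 0)) (f := fun ε : ℝ =>
    (∫ p in halfSpace n, (B0 p * φ p + ∑ i, B i p * pdX φ i p))
        + ε * ∫ p in halfSpace n, G p) ?_ ?_
  · have : Filter.Tendsto (fun ε : ℝ =>
      (∫ p in halfSpace n, (B0 p * φ p + ∑ i, B i p * pdX φ i p))
        + ε * ∫ p in halfSpace n, G p) (nhds 0)
        (nhds ((∫ p in halfSpace n, (B0 p * φ p + ∑ i, B i p * pdX φ i p))
        + 0 * ∫ p in halfSpace n, G p)) := by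
      apply Continuous.tendsto
      fun_prop
    simp only [zero_mul, add_zero] at this
    exact this.mono_left nhdsWithin_le_nhds
  · filter_upwards [self_mem_nhdsWithin] with ε hε using key ε hε

/-- Supersolutions of `h_t ≥ Lh + κ h^q`. -/
def WS {n : ℕ} (a : Fin n → Fin n → Pt n → ℝ) (q κ : ℝ) (h : Pt n → ℝ) : Prop :=
  ∀ φ, TestC1 φ → 0 ≤ ∫ p in halfSpace n,
    (pdT h p * φ p + QF a p (gr φ p) (gr h p) - κ * h p ^ q * φ p)

lemma oddPow_sub_ge {q u v : ℝ} (hq : 1 < q) (huv : v ≤ u) :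
    (2 : ℝ) ^ (-q) * (u - v) ^ q ≤ oddPow q u - oddPow q v := by
  have hpos : ∀ x : ℝ, 0 ≤ x → oddPow q x = x ^ q := by
    intro x hx
    rcases hx.eq_or_lt with rfl | hx
    · simp [oddPow, Real.zero_rpow (by linarith : q ≠ 0)]
    · rw [oddPow, abs_of_pos hx, Real.rpow_sub_one hx.ne']
      field_simp
  have hneg : ∀ x : ℝ, oddPow q (-x) = - oddPow q x := by
    intro x; simp [oddPow]
  have hle : (2 : ℝ) ^ (-q) ≤ 1 := Real.rpow_le_one_of_one_le_of_nonpos (by norm_num) (by linarith)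
  have hsup : ∀ x y : ℝ, 0 ≤ y → y ≤ x → (x - y) ^ q ≤ x ^ q - y ^ q := by
    intro x y hy hxy
    have := Real.add_rpow_le_rpow_add (sub_nonneg.mpr hxy) hy hq.le
    simp only [sub_add_cancel] at this
    linarith
  have h0 : 0 ≤ (u - v) ^ q := Real.rpow_nonneg (by linarith) _
  have h1 : (2 : ℝ) ^ (-q) * (u - v) ^ q ≤ (u - v) ^ q := by nlinarith
  rcases le_total 0 v with hv | hv
  · rw [hpos u (hv.trans huv), hpos v hv]
    exact h1.trans (hsup u v hv huv)
  rcases le_total u 0 with hu | hu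
  · have e1 := hneg (-u)
    have e2 := hneg (-v)
    rw [neg_neg] at e1 e2
    rw [e1, e2, hpos _ (by linarith), hpos _ (by linarith)]
    have := hsup (-v) (-u) (by linarith) (by linarith)
    rw [show -v - -u = u - v by ring] at this
    linarith
  · have e2 := hneg (-v)
    rw [neg_neg] at e2
    rw [e2, hpos u hu, hpos (-v) (by linarith)]
    have e3 : (2 : ℝ) ^ (-q) * (u - v) ^ q = ((u - v) / 2) ^ q := by
      rw [Real.div_rpow (by linarith) (by norm_num), Real.rpow_neg (by norm_num)]
      field_simp
    rw [e3]
    have p1 : 0 ≤ u ^ q := Real.rpow_nonneg hu _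
    have p2 : 0 ≤ (-v) ^ q := Real.rpow_nonneg (by linarith) _
    rcases le_total u (-v) with h | h
    · have := Real.rpow_le_rpow (by linarith : 0 ≤ (u - v) / 2) (by linarith : (u - v) / 2 ≤ -v)
        (by linarith : 0 ≤ q)
      linarith
    · have := Real.rpow_le_rpow (by linarith : 0 ≤ (u - v) / 2) (by linarith : (u - v) / 2 ≤ u)
        (by linarith : 0 ≤ q)
      linarith

lemma oddPow_continuous {q : ℝ} (hq : 1 < q) : Continuous (oddPow q) := by
  unfold oddPow
  exact (continuous_abs.rpow_const fun x => Or.inr (by linarith)).mul continuous_id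

lemma WS_of_sol {n : ℕ} {a : Fin n → Fin n → Pt n → ℝ} {q : ℝ} (hq : 1 < q)
    (ha : ∀ i j, LB (a i j)) {u v : Pt n → ℝ}
    (hu : ContDiffOn ℝ 1 u (halfSpace n)) (hv : ContDiffOn ℝ 1 v (halfSpace n))
    (hsup : WeakSuperSol a q u) (hsub : WeakSubSol a q v)
    (huv : ∀ p ∈ halfSpace n, v p ≤ u p) :
    WS a q ((2 : ℝ) ^ (-q)) (fun p => u p - v p) := by
  have hdiff : ∀ {w : Pt n → ℝ}, ContDiffOn ℝ 1 w (halfSpace n) → ∀ p ∈ halfSpace n,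
      DifferentiableAt ℝ w p := fun hw p hp =>
    (hw.differentiableOn one_ne_zero).differentiableAt ((isOpen_halfSpace n).mem_nhds hp)
  have hT : ∀ p ∈ halfSpace n, pdT (fun p => u p - v p) p = pdT u p - pdT v p := by
    intro p hp
    simp only [pdT]
    rw [fderiv_fun_sub (hdiff hu p hp) (hdiff hv p hp)]; rfl
  have hX : ∀ p ∈ halfSpace n, ∀ i, pdX (fun p => u p - v p) i p = pdX u i p - pdX v i p := by
    intro p hp i
    simp only [pdX]
    rw [fderiv_fun_sub (hdiff hu p hp) (hdiff hv p hp)]; rfl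
  have hB0 : ∀ {w : Pt n → ℝ}, ContDiffOn ℝ 1 w (halfSpace n) →
      LB (fun p => pdT w p - oddPow q (w p)) := fun hw =>
    (LB.of_continuousOn (pdT_continuousOn hw)).sub
      (LB.of_continuousOn ((oddPow_continuous hq).comp_continuousOn hw.continuousOn))
  have hB : ∀ {w : Pt n → ℝ}, ContDiffOn ℝ 1 w (halfSpace n) → ∀ i,
      LB (fun p => ∑ j, a i j p * pdX w j p) := fun hw i =>
    LB.sum _ fun j => (ha i j).mul (LB.of_continuousOn (pdX_continuousOn hw j))
  have hrew : ∀ (w φ : Pt n → ℝ), (fun p => pdT w p * φ p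
      + ∑ i, ∑ j, a i j p * pdX φ i p * pdX w j p - oddPow q (w p) * φ p)
      = fun p => (pdT w p - oddPow q (w p)) * φ p
        + ∑ i, (∑ j, a i j p * pdX w j p) * pdX φ i p := by
    intro w φ
    funext p
    have : ∑ i, ∑ j, a i j p * pdX φ i p * pdX w j p
        = ∑ i, (∑ j, a i j p * pdX w j p) * pdX φ i p := by
      refine Finset.sum_congr rfl fun i _ => ?_
      rw [Finset.sum_mul]
      exact Finset.sum_congr rfl fun j _ => by ring
    rw [this]; ring
  have hIntg : ∀ {w φ : Pt n → ℝ}, ContDiffOn ℝ 1 w (halfSpace n) → ContDiff ℝ 1 φ →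
      HasCompactSupport φ → tsupport φ ⊆ halfSpace n →
      IntegrableOn (fun p => (pdT w p - oddPow q (w p)) * φ p
        + ∑ i, (∑ j, a i j p * pdX w j p) * pdX φ i p) (halfSpace n) := by
    intro w φ hw hφ hφc hφS
    refine LB.integrable (K := tsupport φ) ?_ hφc hφS ?_
    · refine ((hB0 hw).mul (LB.of_continuousOn hφ.continuous.continuousOn)).add
        (LB.sum _ fun i => ?_)
      exact (hB hw i).mul (LB.of_continuousOn (pdX_continuousOn hφ.contDiffOn i))
    · intro p hp
      obtain ⟨e1, -, e2⟩ := pd_eq_zero_of_notMem hp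
      simp [e1, e2]
  intro φ hφ
  have main := extend_test (B0 := fun p => (pdT u p - oddPow q (u p)) - (pdT v p - oddPow q (v p)))
    (B := fun i p => (∑ j, a i j p * pdX u j p) - (∑ j, a i j p * pdX v j p))
    ((hB0 hu).sub (hB0 hv)) (fun i => (hB hu i).sub (hB hv i)) ?_ hφ
  · obtain ⟨h1, hc, hS, h0⟩ := hφ
    refine main.trans ?_
    refine setIntegral_mono_on ?_ ?_ (measurableSet_halfSpace n) ?_
    · refine ((hIntg hu h1 hc hS).sub (hIntg hv h1 hc hS)).congr ?_
      refine Filter.Eventually.of_forall fun p => ?_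
      simp only [Pi.sub_apply, sub_mul, Finset.sum_sub_distrib]
      ring
    · refine LB.integrable (K := tsupport φ) ?_ hc hS ?_
      · have hφL : LB φ := LB.of_continuousOn h1.continuous.continuousOn
        refine (((LB.of_continuousOn (pdT_continuousOn (hu.sub hv))).mul hφL).add ?_).sub ?_
        · refine LB.sum _ fun i => LB.sum _ fun j => ((ha i j).mul ?_).mul ?_
          · exact LB.of_continuousOn (pdX_continuousOn h1.contDiffOn i)
          · exact LB.of_continuousOn (pdX_continuousOn (hu.sub hv) j)
        · refine ((LB.const _).mul ?_).mul hφL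
          refine LB.of_continuousOn ?_
          exact (hu.continuousOn.sub hv.continuousOn).rpow_const fun p _ => Or.inr (by linarith)
      · intro p hp
        obtain ⟨e1, -, e2⟩ := pd_eq_zero_of_notMem hp
        simp [QF, gr, e1, e2]
    · intro p hp
      have e1 : QF a p (gr φ p) (gr (fun p => u p - v p) p)
          = ∑ i, ((∑ j, a i j p * pdX u j p) - (∑ j, a i j p * pdX v j p)) * pdX φ i p := by
        simp only [QF, gr, hX p hp]
        refine Finset.sum_congr rfl fun i _ => ?_
        rw [← Finset.sum_sub_distrib, Finset.sum_mul]
        exact Finset.sum_congr rfl fun j _ => by ring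
      rw [e1, hT p hp]
      have e2 := mul_le_mul_of_nonneg_right (oddPow_sub_ge hq (huv p hp)) (h0 p)
      simp only
      nlinarith
  · intro ψ hψ hψc hψS hψ0
    have i1 := hsup ψ hψ hψc hψS hψ0
    have i2 := hsub ψ hψ hψc hψS hψ0
    rw [hrew] at i1 i2
    have hψ' : ContDiff ℝ 1 ψ := hψ.of_le (by exact_mod_cast le_top)
    have := integral_sub (hIntg hu hψ' hψc hψS) (hIntg hv hψ' hψc hψS)
    have h3 : 0 ≤ ∫ p in halfSpace n, (((pdT u p - oddPow q (u p)) * ψ p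
        + ∑ i, (∑ j, a i j p * pdX u j p) * pdX ψ i p) - ((pdT v p - oddPow q (v p)) * ψ p
        + ∑ i, (∑ j, a i j p * pdX v j p) * pdX ψ i p)) := by
      rw [this]; linarith
    refine h3.trans (le_of_eq ?_)
    congr 1
    funext p
    simp only [sub_mul, Finset.sum_sub_distrib]
    ring

/-! ### The basic integral inequality -/

lemma contDiff_mul_cutoff {n : ℕ} {g ψ : Pt n → ℝ} (hg : ContDiffOn ℝ 1 g (halfSpace n))
    (hψ : ContDiff ℝ 1 ψ) (hS : tsupport ψ ⊆ halfSpace n) :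
    ContDiff ℝ 1 (fun p => g p * ψ p) := by
  rw [contDiff_iff_contDiffAt]
  intro p
  by_cases hp : p ∈ halfSpace n
  · exact (hg.contDiffAt ((isOpen_halfSpace n).mem_nhds hp)).mul hψ.contDiffAt
  · have h1 : (fun p => g p * ψ p) =ᶠ[nhds p] fun _ => 0 := by
      filter_upwards [notMem_tsupport_iff_eventuallyEq.mp (fun h => hp (hS h))] with y hy
      simp [hy]
    exact contDiffAt_const.congr_of_eventuallyEq h1

lemma tsupport_mul_cutoff {n : ℕ} (g ψ : Pt n → ℝ) :
    tsupport (fun p => g p * ψ p) ⊆ tsupport ψ :=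
  closure_mono fun p hp => by
    simp only [Function.mem_support] at hp ⊢
    exact fun h => hp (by simp [h])

lemma integral_pdT_eq_zero {n : ℕ} {φ : Pt n → ℝ} (hφ : ContDiff ℝ 1 φ)
    (hc : HasCompactSupport φ) (hS : tsupport φ ⊆ halfSpace n) :
    ∫ p in halfSpace n, pdT φ p = 0 := by
  have h1 : ∫ p in halfSpace n, pdT φ p = ∫ p, pdT φ p := by
    refine setIntegral_eq_integral_of_forall_compl_eq_zero fun p hp => ?_
    exact (pd_eq_zero_of_notMem fun h => hp (hS h)).2.1
  have hcont : Continuous (fun p => fderiv ℝ φ p ((1 : ℝ), (0 : Xn n))) :=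
    (hφ.continuous_fderiv one_ne_zero).clm_apply continuous_const
  have hsupp : HasCompactSupport (fun p => fderiv ℝ φ p ((1 : ℝ), (0 : Xn n))) :=
    hc.fderiv_apply ℝ _
  have h2 := integral_mul_fderiv_eq_neg_fderiv_mul_of_integrable (μ := (volume : Measure (Pt n)))
    (f := fun _ => (1 : ℝ)) (g := φ) (v := ((1 : ℝ), (0 : Xn n))) (by simp)
    (by simpa using hcont.integrable_of_hasCompactSupport hsupp)
    (by simpa using hφ.continuous.integrable_of_hasCompactSupport hc)
    (fun x _ => differentiableAt_const _) (fun x _ => (hφ.differentiable one_ne_zero) x)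
  rw [h1]
  simpa [pdT] using h2

lemma QF_add_smul_left {n : ℕ} (a : Fin n → Fin n → Pt n → ℝ) (p : Pt n) (s t : ℝ)
    (ξ η ζ : Fin n → ℝ) :
    QF a p (fun i => s * ξ i + t * η i) ζ = s * QF a p ξ ζ + t * QF a p η ζ := by
  simp only [QF, Finset.mul_sum]
  rw [← Finset.sum_add_distrib]
  refine Finset.sum_congr rfl fun i _ => ?_
  rw [← Finset.sum_add_distrib]
  exact Finset.sum_congr rfl fun j _ => by ring

lemma LB.QF {n : ℕ} {a : Fin n → Fin n → Pt n → ℝ} (ha : ∀ i j, LB (a i j))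
    {f g : Pt n → Fin n → ℝ} (hf : ∀ i, LB (fun p => f p i)) (hg : ∀ i, LB (fun p => g p i)) :
    LB (fun p => QF a p (f p) (g p)) :=
  LB.sum _ fun i => LB.sum _ fun j => ((ha i j).mul (hf i)).mul (hg j)

lemma LB.gr {n : ℕ} {w : Pt n → ℝ} (hw : ContDiffOn ℝ 1 w (halfSpace n)) (i : Fin n) :
    LB (fun p => gr w p i) := LB.of_continuousOn (pdX_continuousOn hw i)

lemma contDiffOn_rpow_shift {n : ℕ} {h : Pt n → ℝ} (hh : ContDiffOn ℝ 1 h (halfSpace n))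
    (hpos : ∀ p ∈ halfSpace n, 0 ≤ h p) {d : ℝ} (hd : 0 < d) (r : ℝ) :
    ContDiffOn ℝ 1 (fun p => (h p + d) ^ r) (halfSpace n) :=
  (hh.add contDiffOn_const).rpow_const_of_ne fun p hp => by have := hpos p hp; positivity

lemma fderiv_rpow_mul {n : ℕ} {h ψ : Pt n → ℝ} (hh : ContDiffOn ℝ 1 h (halfSpace n))
    (hψ : ContDiff ℝ 1 ψ) (hpos : ∀ p ∈ halfSpace n, 0 ≤ h p) {d : ℝ} (hd : 0 < d) (r : ℝ)
    {p : Pt n} (hp : p ∈ halfSpace n) (e : Pt n) :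
    fderiv ℝ (fun p => (h p + d) ^ r * ψ p) p e
      = r * (h p + d) ^ (r - 1) * ψ p * fderiv ℝ h p e + (h p + d) ^ r * fderiv ℝ ψ p e := by
  have hd1 : DifferentiableAt ℝ h p :=
    (hh.differentiableOn one_ne_zero).differentiableAt ((isOpen_halfSpace n).mem_nhds hp)
  have h2 : HasFDerivAt (fun p => h p + d) (fderiv ℝ h p) p := hd1.hasFDerivAt.add_const d
  have h3 := h2.rpow_const (p := r) (Or.inl (by have := hpos p hp; positivity))
  have h4 := h3.mul ((hψ.differentiable one_ne_zero) p).hasFDerivAt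
  rw [show (fun p => (h p + d) ^ r * ψ p) = ((fun p => (h p + d) ^ r) * ψ) from rfl, h4.fderiv]
  simp only [ContinuousLinearMap.add_apply, ContinuousLinearMap.smul_apply, smul_eq_mul]
  ring

lemma basic_ineq {n : ℕ} {a : Fin n → Fin n → Pt n → ℝ} {q κ : ℝ} (hq : 1 < q)
    (ha : ∀ i j, LB (a i j)) {h ψ : Pt n → ℝ} (hh : ContDiffOn ℝ 1 h (halfSpace n))
    (hpos : ∀ p ∈ halfSpace n, 0 ≤ h p) (hws : WS a q κ h) (hψ : TestC1 ψ)
    {ν d : ℝ} (hν : ν < 1) (hd : 0 < d) :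
    0 ≤ ∫ p in halfSpace n, (1 / (1 - ν) * (h p + d) ^ (1 - ν) * (- pdT ψ p)
      + (h p + d) ^ (-ν) * QF a p (gr ψ p) (gr h p)
      - ν * (h p + d) ^ (-ν - 1) * ψ p * QF a p (gr h p) (gr h p)
      - κ * h p ^ q * ((h p + d) ^ (-ν) * ψ p)) := by
  obtain ⟨h1, hc, hS, h0⟩ := hψ
  set φ : Pt n → ℝ := fun p => (h p + d) ^ (-ν) * ψ p with hφ
  set Φ : Pt n → ℝ := fun p => (h p + d) ^ (1 - ν) * ψ p with hΦ
  have hφ1 : ContDiff ℝ 1 φ := contDiff_mul_cutoff (contDiffOn_rpow_shift hh hpos hd _) h1 hS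
  have hΦ1 : ContDiff ℝ 1 Φ := contDiff_mul_cutoff (contDiffOn_rpow_shift hh hpos hd _) h1 hS
  have hφs : tsupport φ ⊆ tsupport ψ := tsupport_mul_cutoff _ _
  have hΦs : tsupport Φ ⊆ tsupport ψ := tsupport_mul_cutoff _ _
  have hφc : HasCompactSupport φ := hc.of_isClosed_subset (isClosed_tsupport _) hφs
  have hΦc : HasCompactSupport Φ := hc.of_isClosed_subset (isClosed_tsupport _) hΦs
  have hφ0 : ∀ p, 0 ≤ φ p := by
    intro p
    by_cases hp : p ∈ halfSpace n
    · have := hpos p hp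
      exact mul_nonneg (Real.rpow_nonneg (by linarith) _) (h0 p)
    · simp [hφ, image_eq_zero_of_notMem_tsupport (fun h => hp (hS h))]
  have i1 := hws φ ⟨hφ1, hφc, hφs.trans hS, hφ0⟩
  have i2 := integral_pdT_eq_zero hΦ1 hΦc (hΦs.trans hS)
  have I1 : IntegrableOn (fun p => pdT h p * φ p + QF a p (gr φ p) (gr h p)
      - κ * h p ^ q * φ p) (halfSpace n) := by
    refine LB.integrable (K := tsupport ψ) ?_ hc hS ?_
    · have hφL : LB φ := LB.of_continuousOn hφ1.continuous.continuousOn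
      refine (((LB.of_continuousOn (pdT_continuousOn hh)).mul hφL).add
        (LB.QF ha (LB.gr hφ1.contDiffOn) (LB.gr hh))).sub (((LB.const _).mul ?_).mul hφL)
      exact LB.of_continuousOn (hh.continuousOn.rpow_const fun p _ => Or.inr (by linarith))
    · intro p hp
      obtain ⟨e1, -, e2⟩ := pd_eq_zero_of_notMem (fun h => hp (hφs h))
      simp [QF, gr, e1, e2]
  have I2 : IntegrableOn (pdT Φ) (halfSpace n) := by
    refine LB.integrable (K := tsupport ψ) ?_ hc hS ?_
    · exact LB.of_continuousOn (pdT_continuousOn hΦ1.contDiffOn)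
    · intro p hp
      exact (pd_eq_zero_of_notMem (fun h => hp (hΦs h))).2.1
  have i3 := integral_sub I1 (I2.const_mul (1 / (1 - ν)))
  rw [integral_const_mul, i2, mul_zero, sub_zero] at i3
  rw [← i3] at i1
  refine i1.trans (le_of_eq (setIntegral_congr_fun (measurableSet_halfSpace n) fun p hp => ?_))
  have hne : (1 - ν) ≠ 0 := by linarith
  have eT : pdT Φ p = (1 - ν) * (h p + d) ^ (-ν) * ψ p * pdT h p
      + (h p + d) ^ (1 - ν) * pdT ψ p := by
    have := fderiv_rpow_mul hh h1 hpos hd (1 - ν) hp (1, 0)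
    rw [show 1 - ν - 1 = -ν by ring] at this
    exact this
  have eX : gr φ p = fun i => (-ν * (h p + d) ^ (-ν - 1) * ψ p) * gr h p i
      + (h p + d) ^ (-ν) * gr ψ p i := by
    funext i
    exact fderiv_rpow_mul hh h1 hpos hd (-ν) hp _
  simp only [eT]
  rw [eX, QF_add_smul_left]
  simp only [hφ]
  field_simp
  ring

/-! ### Pointwise inequalities -/

lemma young1 {p r : ℝ} (hp : 0 < p) (hpr : p < r) {N : ℕ}
    (hN : 2 * p / (r - p) ≤ (N - 2 : ℕ)) {K C : ℝ} (hK : 0 < K) (hC : 0 < C) :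
    ∃ K', 0 ≤ K' ∧ ∀ H χ b : ℝ, 0 ≤ H → 0 ≤ χ → χ ≤ 1 → 0 ≤ b → b ≤ χ ^ (N - 2) →
      K * (H ^ p * b) ≤ C * (H ^ r * (b * χ ^ 2)) + K' := by
  refine ⟨K * (K / C) ^ (p / (r - p)), by positivity, ?_⟩
  intro H χ b hH hχ0 hχ1 hb hbχ
  have hrp : 0 < r - p := by linarith
  have hHp : 0 ≤ H ^ p := Real.rpow_nonneg hH _
  have hHr : 0 ≤ H ^ r := Real.rpow_nonneg hH _
  have hHrp : H ^ r = H ^ p * H ^ (r - p) := by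
    rw [← Real.rpow_add_of_nonneg hH hp.le hrp.le]; congr 1; ring
  rcases le_total K (C * (H ^ (r - p) * χ ^ 2)) with h | h
  · have : K * (H ^ p * b) ≤ C * (H ^ (r - p) * χ ^ 2) * (H ^ p * b) :=
      mul_le_mul_of_nonneg_right h (by positivity)
    have h2 : 0 ≤ K * (K / C) ^ (p / (r - p)) := by positivity
    rw [hHrp]
    nlinarith
  · have h1 : H ^ (r - p) * χ ^ 2 ≤ K / C := by
      rw [le_div_iff₀ hC]; linarith
    have h2 : H ^ p * b ≤ (K / C) ^ (p / (r - p)) := by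
      calc H ^ p * b ≤ H ^ p * χ ^ (2 * p / (r - p)) := by
            refine mul_le_mul_of_nonneg_left (hbχ.trans ?_) hHp
            rcases hχ0.eq_or_lt with h0 | h0
            · rw [← h0, Real.zero_rpow (by positivity)]
              have : N - 2 ≠ 0 := by
                intro h3
                rw [h3] at hN
                have : 0 < 2 * p / (r - p) := by positivity
                simp at hN; linarith
              simp [this]
            · rw [← Real.rpow_natCast]
              exact Real.rpow_le_rpow_of_exponent_ge h0 hχ1 hN
        _ = (H ^ (r - p) * χ ^ 2) ^ (p / (r - p)) := by
            rw [Real.mul_rpow (by positivity) (by positivity), ← Real.rpow_mul hH,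
              ← Real.rpow_natCast, ← Real.rpow_mul hχ0]
            congr 2
            · field_simp
            · push_cast; ring
        _ ≤ (K / C) ^ (p / (r - p)) :=
            Real.rpow_le_rpow (by positivity) h1 (by positivity)
    have h3 : 0 ≤ C * (H ^ r * (b * χ ^ 2)) := by positivity
    nlinarith [mul_le_mul_of_nonneg_left h2 hK.le]

lemma young2 {p q s : ℝ} (hp : 0 < p) (hq : 0 < q) (hpr : p < q + s) {N : ℕ}
    (hN : 2 * p / (q + s - p) ≤ (N - 2 : ℕ)) {K C : ℝ} (hK : 0 < K) (hC : 0 < C) :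
    ∃ K', 0 ≤ K' ∧ ∀ h d χ b : ℝ, 0 ≤ h → 0 < d → d ≤ 1 → 0 ≤ χ → χ ≤ 1 → 0 ≤ b →
      b ≤ χ ^ (N - 2) →
      K * ((h + d) ^ p * b) ≤ C * (h ^ q * ((h + d) ^ s * (b * χ ^ 2))) + K' := by
  obtain ⟨K', hK', H⟩ := young1 hp hpr hN hK (by positivity : 0 < C * 2⁻¹ ^ q)
  refine ⟨K' + K * 2 ^ p, by positivity, ?_⟩
  intro h d χ b hh hd hd1 hχ0 hχ1 hb hbχ
  have hb1 : b ≤ 1 := hbχ.trans (pow_le_one₀ hχ0 hχ1)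
  have hH : 0 < h + d := by linarith
  have hKp : 0 ≤ K * 2 ^ p := by positivity
  rcases le_total (h + d) 2 with h2 | h2
  · have h3 : (h + d) ^ p * b ≤ 2 ^ p * 1 :=
      mul_le_mul (Real.rpow_le_rpow hH.le h2 hp.le) hb1 hb (by positivity)
    have h4 : 0 ≤ C * (h ^ q * ((h + d) ^ s * (b * χ ^ 2))) := by positivity
    nlinarith [mul_le_mul_of_nonneg_left h3 hK.le]
  · have h1 := H (h + d) χ b hH.le hχ0 hχ1 hb hbχ
    have h3 : (2⁻¹ * (h + d)) ^ q ≤ h ^ q :=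
      Real.rpow_le_rpow (by positivity) (by linarith) hq.le
    rw [Real.mul_rpow (by positivity) hH.le] at h3
    have h4 : C * 2⁻¹ ^ q * ((h + d) ^ (q + s) * (b * χ ^ 2))
        ≤ C * (h ^ q * ((h + d) ^ s * (b * χ ^ 2))) := by
      rw [Real.rpow_add hH]
      have : 0 ≤ C * ((h + d) ^ s * (b * χ ^ 2)) := by positivity
      nlinarith [mul_le_mul_of_nonneg_right h3 this]
    linarith

lemma young3 {ν q k L ε : ℝ} (hν : 0 < ν) (hq : 1 + ν < q) (hk : 0 < k) (hL : 0 < L)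
    (hε : 0 < ε) :
    ∃ d C', 0 < d ∧ d ≤ 1 ∧ 0 ≤ C' ∧ ∀ h : ℝ, 0 ≤ h →
      k * ((h + d) + L * (h + d) ^ (1 + ν)) ≤ ε + C' * h ^ q := by
  set σ := min 1 (ε / (k * (1 + L))) with hσ
  have hσ0 : 0 < σ := by positivity
  have hσ1 : σ ≤ 1 := min_le_left _ _
  have hσ2 : σ * (k * (1 + L)) ≤ ε := by
    rw [← le_div_iff₀ (by positivity)]; exact min_le_right _ _
  have hb : ∀ p : ℝ, 0 ≤ p → p ≤ q → ∀ h, σ / 2 ≤ h →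
      (h + σ / 2) ^ p ≤ (2 ^ p * (σ / 2) ^ (p - q)) * h ^ q := by
    intro p hp hpq h hh
    have hh0 : 0 < h := by linarith
    calc (h + σ / 2) ^ p ≤ (2 * h) ^ p := Real.rpow_le_rpow (by positivity) (by linarith) hp
      _ = 2 ^ p * (h ^ (p - q) * h ^ q) := by
          rw [Real.mul_rpow (by norm_num) hh0.le, ← Real.rpow_add hh0]; congr 2; ring
      _ ≤ 2 ^ p * ((σ / 2) ^ (p - q) * h ^ q) := by
          have := Real.rpow_le_rpow_of_nonpos (by positivity : 0 < σ / 2) hh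
            (by linarith : p - q ≤ 0)
          gcongr
      _ = _ := by ring
  refine ⟨σ / 2, k * (2 ^ (1 : ℝ) * (σ / 2) ^ (1 - q)
    + L * (2 ^ (1 + ν) * (σ / 2) ^ (1 + ν - q))), by positivity, by linarith, by positivity, ?_⟩
  intro h hh
  rcases le_total h (σ / 2) with h1 | h1
  · have e1 : h + σ / 2 ≤ σ := by linarith
    have e2 : (h + σ / 2) ^ (1 + ν) ≤ σ := by
      calc (h + σ / 2) ^ (1 + ν) ≤ σ ^ (1 + ν) :=
            Real.rpow_le_rpow (by positivity) e1 (by linarith)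
        _ ≤ σ ^ (1 : ℝ) := Real.rpow_le_rpow_of_exponent_ge hσ0 hσ1 (by linarith)
        _ = σ := Real.rpow_one _
    have e3 : 0 ≤ k * (2 ^ (1 : ℝ) * (σ / 2) ^ (1 - q)
      + L * (2 ^ (1 + ν) * (σ / 2) ^ (1 + ν - q))) * h ^ q := by positivity
    have e4 : k * ((h + σ / 2) + L * (h + σ / 2) ^ (1 + ν)) ≤ k * (σ + L * σ) := by gcongr
    linarith [show k * (σ + L * σ) = σ * (k * (1 + L)) by ring]
  · have e1 := hb 1 (by norm_num) (by linarith) h h1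
    have e2 := hb (1 + ν) (by linarith) (by linarith) h h1
    rw [Real.rpow_one (h + σ / 2)] at e1
    have e4 : k * ((h + σ / 2) + L * (h + σ / 2) ^ (1 + ν))
      ≤ k * ((2 ^ (1 : ℝ) * (σ / 2) ^ (1 - q)) * h ^ q
        + L * ((2 ^ (1 + ν) * (σ / 2) ^ (1 + ν - q)) * h ^ q)) := by gcongr
    refine e4.trans ?_
    linarith [show k * ((2 ^ (1 : ℝ) * (σ / 2) ^ (1 - q)) * h ^ q
        + L * ((2 ^ (1 + ν) * (σ / 2) ^ (1 + ν - q)) * h ^ q)) = k * (2 ^ (1 : ℝ) * (σ / 2) ^ (1 - q)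
    + L * (2 ^ (1 + ν) * (σ / 2) ^ (1 + ν - q))) * h ^ q by ring]

/-! ### Energy and mass estimates for an abstract cutoff -/

/-- The pointwise Cauchy-Schwarz inequality for the form. -/
def FormOK {n : ℕ} (a : Fin n → Fin n → Pt n → ℝ) : Prop :=
  ∀ᵐ p ∂(volume.restrict (halfSpace n)), ∀ ξ η : Fin n → ℝ,
    0 ≤ QF a p ξ ξ ∧ ∀ s l : ℝ, 0 < l →
      s * QF a p ξ η ≤ l / 2 * (s ^ 2 * QF a p η η) + 1 / (2 * l) * QF a p ξ ξ

/-- Indicator of a set as a real valued function. -/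
def ind {n : ℕ} (D : Set (Pt n)) : Pt n → ℝ := D.indicator (fun _ => 1)

lemma ind_nonneg {n : ℕ} (D : Set (Pt n)) (p : Pt n) : 0 ≤ ind D p :=
  Set.indicator_nonneg (fun _ _ => zero_le_one) p

lemma ind_le_one {n : ℕ} (D : Set (Pt n)) (p : Pt n) : ind D p ≤ 1 := by
  unfold ind Set.indicator; split_ifs <;> norm_num

lemma LB.ind {n : ℕ} {D : Set (Pt n)} (hD : MeasurableSet D) : LB (ind D) := by
  refine ⟨(measurable_const.indicator hD).aestronglyMeasurable, fun K _ _ => ⟨1, fun p _ => ?_⟩⟩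
  rw [abs_of_nonneg (ind_nonneg D p)]
  exact ind_le_one D p

/-- A cutoff function adapted to the scale. -/
structure Cut {n : ℕ} (a : Fin n → Fin n → Pt n → ℝ) (N : ℕ) (k T : ℝ) (D K : Set (Pt n))
    (ψ b χ : Pt n → ℝ) (z : Pt n → Fin n → ℝ) : Prop where
  test : TestC1 ψ
  hK : IsCompact K
  hKS : K ⊆ halfSpace n
  hD : MeasurableSet D
  hbL : LB b
  hb0 : ∀ p, 0 ≤ b p
  hbK : ∀ p, p ∉ K → b p = 0
  hχ0 : ∀ p, 0 ≤ χ p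
  hχ1 : ∀ p, χ p ≤ 1
  hbχ : ∀ p, b p ≤ χ p ^ (N - 2)
  hψ : ∀ p, ψ p = b p * χ p ^ 2
  hgr : ∀ p ∈ halfSpace n, ∀ i, gr ψ p i = N * b p * χ p * z p i
  ht : ∀ p ∈ halfSpace n, - pdT ψ p ≤ k / T * b p * ind D p
  hz : ∀ᵐ p ∂(volume.restrict (halfSpace n)), QF a p (z p) (z p) ≤ k / T * ind D p

section
variable {n : ℕ} {a : Fin n → Fin n → Pt n → ℝ} {N : ℕ} {k T : ℝ} {D K : Set (Pt n)}
    {ψ b χ : Pt n → ℝ} {z : Pt n → Fin n → ℝ}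

lemma Cut.b_le_one (hcut : Cut a N k T D K ψ b χ z) (p : Pt n) : b p ≤ 1 :=
  (hcut.hbχ p).trans (pow_le_one₀ (hcut.hχ0 p) (hcut.hχ1 p))

lemma Cut.psiL (hcut : Cut a N k T D K ψ b χ z) : LB ψ :=
  LB.of_continuousOn hcut.test.1.continuous.continuousOn

lemma Cut.psi_zero (hcut : Cut a N k T D K ψ b χ z) (p : Pt n) (hp : p ∉ K) : ψ p = 0 := by
  rw [hcut.hψ, hcut.hbK p hp, zero_mul]

lemma Cut.tsupport_subset (hcut : Cut a N k T D K ψ b χ z) : tsupport ψ ⊆ K :=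
  closure_minimal (fun p hp => by
    by_contra h
    exact hp (hcut.psi_zero p h)) hcut.hK.isClosed

lemma Cut.integrable (hcut : Cut a N k T D K ψ b χ z) {F : Pt n → ℝ} (hF : LB F)
    (h0 : ∀ p, p ∉ K → F p = 0) : IntegrableOn F (halfSpace n) :=
  LB.integrable hF hcut.hK hcut.hKS h0

lemma Cut.integral_ind (hcut : Cut a N k T D K ψ b χ z) :
    ∫ p in halfSpace n, ind K p = volume.real K := by
  rw [show ind K = K.indicator (fun _ => (1 : ℝ)) from rfl,
    setIntegral_indicator hcut.hK.measurableSet, Set.inter_eq_self_of_subset_right hcut.hKS]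
  simp

lemma Cut.gr_zero (hcut : Cut a N k T D K ψ b χ z) (p : Pt n) (hp : p ∉ K) : gr ψ p = 0 := by
  funext i
  exact (pd_eq_zero_of_notMem (fun h => hp (hcut.tsupport_subset h))).2.2 i

lemma Cut.QF_gr (hcut : Cut a N k T D K ψ b χ z) {p : Pt n} (hp : p ∈ halfSpace n)
    (η : Fin n → ℝ) : QF a p (gr ψ p) η = N * b p * (χ p * QF a p (z p) η) := by
  have : gr ψ p = fun i => (N * b p * χ p) * z p i + 0 * z p i := by
    funext i; rw [hcut.hgr p hp i]; ring
  rw [this, QF_add_smul_left]; ring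

lemma LB.rpow_shift {h : Pt n → ℝ} (hh : ContDiffOn ℝ 1 h (halfSpace n))
    (hpos : ∀ p ∈ halfSpace n, 0 ≤ h p) {d : ℝ} (hd : 0 < d) (r : ℝ) :
    LB (fun p => (h p + d) ^ r) :=
  LB.of_continuousOn (contDiffOn_rpow_shift hh hpos hd r).continuousOn

lemma LB.rpow {h : Pt n → ℝ} (hh : ContDiffOn ℝ 1 h (halfSpace n)) {q : ℝ} (hq : 0 ≤ q) :
    LB (fun p => h p ^ q) :=
  LB.of_continuousOn (hh.continuousOn.rpow_const fun _ _ => Or.inr hq)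

lemma Cut.integrable_basic (hcut : Cut a N k T D K ψ b χ z) {q κ : ℝ} (hq : 1 < q)
    (ha : ∀ i j, LB (a i j)) {h : Pt n → ℝ} (hh : ContDiffOn ℝ 1 h (halfSpace n))
    (hpos : ∀ p ∈ halfSpace n, 0 ≤ h p) {ν d : ℝ} (hd : 0 < d) :
    IntegrableOn (fun p => 1 / (1 - ν) * (h p + d) ^ (1 - ν) * (- pdT ψ p)
      + (h p + d) ^ (-ν) * QF a p (gr ψ p) (gr h p)
      - ν * (h p + d) ^ (-ν - 1) * ψ p * QF a p (gr h p) (gr h p)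
      - κ * h p ^ q * ((h p + d) ^ (-ν) * ψ p)) (halfSpace n) := by
  have hr := fun r => LB.rpow_shift hh hpos hd r
  have hψ1 : ContDiffOn ℝ 1 ψ (halfSpace n) := hcut.test.1.contDiffOn
  refine hcut.integrable ?_ ?_
  · refine ((((((LB.const _).mul (hr _)).mul
      (LB.of_continuousOn (pdT_continuousOn hψ1)).neg).add ((hr _).mul
      (LB.QF ha (LB.gr hψ1) (LB.gr hh)))).sub ((((LB.const _).mul (hr _)).mul hcut.psiL).mul
      (LB.QF ha (LB.gr hh) (LB.gr hh)))).sub (((LB.const _).mul (LB.rpow hh (by linarith))).mul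
      ((hr _).mul hcut.psiL)))
  · intro p hp
    obtain ⟨e1, e2, -⟩ := pd_eq_zero_of_notMem (fun h => hp (hcut.tsupport_subset h))
    rw [hcut.gr_zero p hp]
    simp [QF, e1, e2]

lemma Cut.integrable_energy (hcut : Cut a N k T D K ψ b χ z)
    (ha : ∀ i j, LB (a i j)) {h : Pt n → ℝ} (hh : ContDiffOn ℝ 1 h (halfSpace n))
    (hpos : ∀ p ∈ halfSpace n, 0 ≤ h p) {ν d : ℝ} (hd : 0 < d) :
    IntegrableOn (fun p => (h p + d) ^ (-ν - 1) * ψ p * QF a p (gr h p) (gr h p))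
      (halfSpace n) := by
  refine hcut.integrable (((LB.rpow_shift hh hpos hd _).mul hcut.psiL).mul
      (LB.QF ha (LB.gr hh) (LB.gr hh))) ?_
  intro p hp
  rw [hcut.psi_zero p hp]; ring

end

lemma energy_est {q ν C k : ℝ} (hq : 1 < q) (hν : 0 < ν) (hν1 : ν < 1) (hC : 0 < C) (hk : 0 < k)
    {N : ℕ} (hN0 : 0 < N) (hN : 2 * (1 - ν) / (q - 1) ≤ (N - 2 : ℕ)) :
    ∃ K1, 0 ≤ K1 ∧ ∀ {n : ℕ} {a : Fin n → Fin n → Pt n → ℝ} {T : ℝ} {D K : Set (Pt n)}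
    {ψ b χ : Pt n → ℝ} {z : Pt n → Fin n → ℝ} {h : Pt n → ℝ} {d : ℝ},
    0 < T → Cut a N k T D K ψ b χ z → (∀ i j, LB (a i j)) → FormOK a →
    ContDiffOn ℝ 1 h (halfSpace n) → (∀ p ∈ halfSpace n, 0 ≤ h p) → WS a q (C / T) h →
    0 < d → d ≤ 1 →
    ∫ p in halfSpace n, (h p + d) ^ (-ν - 1) * ψ p * QF a p (gr h p) (gr h p)
      ≤ K1 / T * volume.real K := by
  have hNp : (0 : ℝ) < N := by exact_mod_cast hN0
  have h1ν : 0 < 1 - ν := by linarith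
  have hK0 : 0 < k / (1 - ν) + N ^ 2 * k / (2 * ν) := by positivity
  obtain ⟨K', hK', Y⟩ := young2 (p := 1 - ν) (q := q) (s := -ν) (N := N) h1ν (by linarith)
    (by linarith) (by rw [show q + -ν - (1 - ν) = q - 1 by ring]; exact hN) hK0 hC
  refine ⟨2 / ν * K', by positivity, ?_⟩
  intro n a T D K ψ b χ z h d hT hcut ha hform hh hpos hws hd hd1
  have B := basic_ineq hq ha hh hpos hws hcut.test hν1 hd
  have IE := hcut.integrable_energy ha hh hpos (ν := ν) hd
  have IK : IntegrableOn (ind K) (halfSpace n) := by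
    refine hcut.integrable (LB.ind hcut.hK.measurableSet) fun p hp => ?_
    simp [ind, hp]
  have M : ∫ p in halfSpace n, (1 / (1 - ν) * (h p + d) ^ (1 - ν) * (- pdT ψ p)
      + (h p + d) ^ (-ν) * QF a p (gr ψ p) (gr h p)
      - ν * (h p + d) ^ (-ν - 1) * ψ p * QF a p (gr h p) (gr h p)
      - C / T * h p ^ q * ((h p + d) ^ (-ν) * ψ p))
      ≤ ∫ p in halfSpace n, (K' / T * ind K p
        - ν / 2 * ((h p + d) ^ (-ν - 1) * ψ p * QF a p (gr h p) (gr h p))) := by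
    refine integral_mono_ae (hcut.integrable_basic hq ha hh hpos hd)
      ((IK.const_mul _).sub (IE.const_mul _)) ?_
    filter_upwards [hform, hcut.hz, ae_restrict_mem (measurableSet_halfSpace n)] with p hf hz hp
    by_cases hpK : p ∈ K
    swap
    · obtain ⟨e1, e2, -⟩ := pd_eq_zero_of_notMem (fun h => hpK (hcut.tsupport_subset h))
      rw [hcut.gr_zero p hpK]
      simp [QF, e1, e2, ind, hpK]
    have hh0 := hpos p hp
    have hHpos : 0 < h p + d := by linarith
    have hb0 := hcut.hb0 p
    have hind : ind K p = 1 := by simp [ind, hpK]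
    have t1 : - pdT ψ p ≤ k / T * b p := (hcut.ht p hp).trans (by
      have := ind_le_one D p
      have h2 : 0 ≤ k / T * b p := by positivity
      nlinarith)
    have t2 : QF a p (z p) (z p) ≤ k / T := hz.trans (by
      have := ind_le_one D p
      have h2 : 0 ≤ k / T := by positivity
      nlinarith)
    have cs := (hf (z p) (gr h p)).2 (χ p) (ν / (N * (h p + d))) (by positivity)
    have y := Y (h p) d (χ p) (b p) hh0 hd hd1 (hcut.hχ0 p) (hcut.hχ1 p) hb0 (hcut.hbχ p)
    rw [hcut.QF_gr hp, hind, hcut.hψ p]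
    set H := h p + d with hH
    set E := QF a p (gr h p) (gr h p)
    set Z := QF a p (z p) (z p)
    set X := QF a p (z p) (gr h p)
    have r1 : H ^ (1 - ν) = H ^ (-ν) * H := by
      rw [← Real.rpow_add_one hHpos.ne']; congr 1; ring
    have r2 : H ^ (-ν - 1) = H ^ (-ν) / H := Real.rpow_sub_one hHpos.ne' _
    have hP : 0 < H ^ (-ν) := Real.rpow_pos_of_pos hHpos _
    have s1 : 1 / (1 - ν) * H ^ (1 - ν) * (-pdT ψ p)
        ≤ 1 / (1 - ν) * H ^ (1 - ν) * (k / T * b p) :=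
      mul_le_mul_of_nonneg_left t1 (by positivity)
    have s2 : H ^ (-ν) * (N * b p * (χ p * X)) ≤ H ^ (-ν) * (N * b p *
        (ν / (N * H) / 2 * (χ p ^ 2 * E) + 1 / (2 * (ν / (N * H))) * (k / T))) := by
      have : 0 ≤ 1 / (2 * (ν / (N * H))) := by positivity
      have h3 := mul_le_mul_of_nonneg_left t2 this
      gcongr
      linarith
    have s3 : H ^ (-ν) * (N * b p *
        (ν / (N * H) / 2 * (χ p ^ 2 * E) + 1 / (2 * (ν / (N * H))) * (k / T)))
        = ν / 2 * (H ^ (-ν - 1) * (b p * χ p ^ 2) * E)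
          + N ^ 2 * k / (2 * ν) * (H ^ (1 - ν) * b p) / T := by
      rw [r1, r2]
      field_simp
    have s4 : 1 / (1 - ν) * H ^ (1 - ν) * (k / T * b p)
        = k / (1 - ν) * (H ^ (1 - ν) * b p) / T := by field_simp
    have s5 := div_le_div_of_nonneg_right y hT.le
    have s6 : (k / (1 - ν) + N ^ 2 * k / (2 * ν)) * (H ^ (1 - ν) * b p) / T
        = k / (1 - ν) * (H ^ (1 - ν) * b p) / T
          + N ^ 2 * k / (2 * ν) * (H ^ (1 - ν) * b p) / T := by ring
    have s7 : (C * (h p ^ q * (H ^ (-ν) * (b p * χ p ^ 2))) + K') / T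
        = C / T * h p ^ q * (H ^ (-ν) * (b p * χ p ^ 2)) + K' / T := by ring
    have s8 : ν * H ^ (-ν - 1) * (b p * χ p ^ 2) * E
      = ν * (H ^ (-ν - 1) * (b p * χ p ^ 2) * E) := by ring
    rw [s6, s7] at s5
    rw [s8]
    linarith
  rw [integral_sub (IK.const_mul _) (IE.const_mul _), integral_const_mul, integral_const_mul,
    hcut.integral_ind] at M
  have h5 : ν / 2 * ∫ p in halfSpace n, (h p + d) ^ (-ν - 1) * ψ p * QF a p (gr h p) (gr h p)
      ≤ K' / T * volume.real K := by linarith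
  have h6 : 2 / ν * K' / T * volume.real K = 2 / ν * (K' / T * volume.real K) := by ring
  rw [h6, ← div_le_iff₀' (by positivity)]
  refine le_trans (le_of_eq ?_) h5
  field_simp

lemma mass_est {q ν C k : ℝ} (hq : 1 < q) (hC : 0 < C)
    {N : ℕ} (hN0 : 0 < N) {K1 : ℝ}
    {n : ℕ} {a : Fin n → Fin n → Pt n → ℝ} {T : ℝ} {D K : Set (Pt n)}
    {ψ b χ : Pt n → ℝ} {z : Pt n → Fin n → ℝ} {h : Pt n → ℝ} {d ε : ℝ}
    (hT : 0 < T) (hcut : Cut a N k T D K ψ b χ z) (ha : ∀ i j, LB (a i j)) (hform : FormOK a)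
    (hh : ContDiffOn ℝ 1 h (halfSpace n)) (hpos : ∀ p ∈ halfSpace n, 0 ≤ h p)
    (hws : WS a q (C / T) h) (hd : 0 < d) (hε : 0 < ε)
    (hE : ∫ p in halfSpace n, (h p + d) ^ (-ν - 1) * ψ p * QF a p (gr h p) (gr h p)
      ≤ K1 / T * volume.real K)
    {F : Pt n → ℝ} (hF : IntegrableOn F (halfSpace n))
    (hFle : ∀ p ∈ halfSpace n, k * ((h p + d) + N ^ 2 / (4 * ε) * (h p + d) ^ (1 + ν)) * b p
      * ind D p ≤ F p) :
    C * ∫ p in halfSpace n, h p ^ q * ψ p ≤ ε * K1 * volume.real K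
      + ∫ p in halfSpace n, F p := by
  have hNp : (0 : ℝ) < N := by exact_mod_cast hN0
  have B := basic_ineq hq ha hh hpos hws hcut.test (ν := 0) (by norm_num) hd
  have IB := hcut.integrable_basic (κ := C / T) hq ha hh hpos (ν := 0) hd
  have IE := hcut.integrable_energy ha hh hpos (ν := ν) hd
  have IP : IntegrableOn (fun p => h p ^ q * ψ p) (halfSpace n) := by
    refine hcut.integrable ((LB.rpow hh (by linarith)).mul hcut.psiL) fun p hp => ?_
    rw [hcut.psi_zero p hp, mul_zero]
  have M := integral_mono_ae IB (((IE.const_mul ε).add (hF.const_mul (1 / T))).sub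
    (IP.const_mul (C / T))) ?_
  · have e1 := B.trans M
    rw [integral_sub' ((IE.const_mul ε).add (hF.const_mul (1 / T))) (IP.const_mul (C / T)),
      integral_add' (IE.const_mul ε) (hF.const_mul (1 / T)), integral_const_mul,
      integral_const_mul, integral_const_mul] at e1
    have e2 := mul_le_mul_of_nonneg_left hE hε.le
    have e3 : C / T * ∫ p in halfSpace n, h p ^ q * ψ p ≤ ε * (K1 / T * volume.real K)
      + 1 / T * ∫ p in halfSpace n, F p := by linarith
    have e4 := mul_le_mul_of_nonneg_left e3 hT.le
    calc _ = T * (C / T * ∫ p in halfSpace n, h p ^ q * ψ p) := by field_simp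
      _ ≤ _ := e4
      _ = _ := by field_simp
  · filter_upwards [hform, hcut.hz, ae_restrict_mem (measurableSet_halfSpace n)] with p hf hz hp
    have hh0 := hpos p hp
    have hHpos : 0 < h p + d := by linarith
    have hb0 := hcut.hb0 p
    have t1 := hcut.ht p hp
    have t3 := div_le_div_of_nonneg_right (hFle p hp) hT.le
    have hR : 0 < (h p + d) ^ (-ν - 1) := Real.rpow_pos_of_pos hHpos _
    have cs := (hf (z p) (gr h p)).2 (χ p) (2 * ε / N * (h p + d) ^ (-ν - 1)) (by positivity)
    simp only [Pi.add_apply, Pi.sub_apply]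
    rw [hcut.QF_gr hp, hcut.hψ p]
    set H := h p + d with hH
    set E := QF a p (gr h p) (gr h p)
    set Z := QF a p (z p) (z p)
    set X := QF a p (z p) (gr h p)
    have r1 : H ^ (1 + ν) = (H ^ (-ν - 1))⁻¹ := by
      rw [← Real.rpow_neg hHpos.le]; congr 1; ring
    have s1 : H * (-pdT ψ p) ≤ H * (k / T * b p * ind D p) :=
      mul_le_mul_of_nonneg_left t1 hHpos.le
    have s2 : N * b p * (χ p * X) ≤ N * b p *
        (2 * ε / N * H ^ (-ν - 1) / 2 * (χ p ^ 2 * E)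
          + 1 / (2 * (2 * ε / N * H ^ (-ν - 1))) * (k / T * ind D p)) := by
      have : 0 ≤ 1 / (2 * (2 * ε / N * H ^ (-ν - 1))) := by positivity
      have h3 := mul_le_mul_of_nonneg_left hz this
      gcongr
      linarith
    have s3 : N * b p *
        (2 * ε / N * H ^ (-ν - 1) / 2 * (χ p ^ 2 * E)
          + 1 / (2 * (2 * ε / N * H ^ (-ν - 1))) * (k / T * ind D p))
        = ε * (H ^ (-ν - 1) * (b p * χ p ^ 2) * E)
          + N ^ 2 / (4 * ε) * (H ^ (1 + ν)) * k * b p * ind D p / T := by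
      rw [r1]
      field_simp
      ring
    simp only [sub_zero, neg_zero, Real.rpow_zero, Real.rpow_one, one_mul, zero_mul, div_one]
    have s4 : k * (H + N ^ 2 / (4 * ε) * H ^ (1 + ν)) * b p * ind D p / T
      = H * (k / T * b p * ind D p) + N ^ 2 / (4 * ε) * (H ^ (1 + ν)) * k * b p * ind D p / T := by
      ring
    rw [s4] at t3
    have s5 : C / T * h p ^ q * (b p * χ p ^ 2) = C / T * (h p ^ q * (b p * χ p ^ 2)) := by ring
    rw [s5]
    have s6 : 1 / T * F p = F p / T := by ring
    rw [s6]
    linarith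

/-! ### Structural reductions -/

lemma formOK_of {n : ℕ} {a : Fin n → Fin n → Pt n → ℝ} {A : Pt n → ℝ}
    (ha_symm : ∀ i j, ∀ᵐ p ∂(volume.restrict (halfSpace n)), a i j p = a j i p)
    (hform : ∀ᵐ p ∂(volume.restrict (halfSpace n)), ∀ ξ : Xn n,
      0 ≤ ∑ i, ∑ j, a i j p * ξ i * ξ j ∧
      ∑ i, ∑ j, a i j p * ξ i * ξ j ≤ A p * ‖ξ‖ ^ 2) : FormOK a := by
  have hs : ∀ᵐ p ∂(volume.restrict (halfSpace n)), ∀ i j, a i j p = a j i p := by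
    rw [ae_all_iff]; intro i; rw [ae_all_iff]; exact ha_symm i
  filter_upwards [hform, hs] with p hf hs ξ η
  have hnn : ∀ ξ : Fin n → ℝ, 0 ≤ QF a p ξ ξ := fun ξ => (hf (WithLp.toLp 2 ξ)).1
  refine ⟨hnn ξ, fun s l hl => ?_⟩
  have hsym : QF a p η ξ = QF a p ξ η := by
    simp only [QF]
    rw [Finset.sum_comm]
    refine Finset.sum_congr rfl fun i _ => Finset.sum_congr rfl fun j _ => ?_
    rw [hs j i]; ring
  have hright : ∀ (s t : ℝ) (ζ ξ η : Fin n → ℝ),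
      QF a p ζ (fun i => s * ξ i + t * η i) = s * QF a p ζ ξ + t * QF a p ζ η := by
    intro s t ζ ξ η
    simp only [QF, Finset.mul_sum]
    rw [← Finset.sum_add_distrib]
    refine Finset.sum_congr rfl fun i _ => ?_
    rw [← Finset.sum_add_distrib]
    exact Finset.sum_congr rfl fun j _ => by ring
  have h1 := hnn (fun i => (l * s) * η i + (-1) * ξ i)
  rw [QF_add_smul_left, hright, hright, hsym] at h1
  have h2 : s * QF a p ξ η * (2 * l) ≤ (l / 2 * (s ^ 2 * QF a p η η)
      + 1 / (2 * l) * QF a p ξ ξ) * (2 * l) := by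
    have : (l / 2 * (s ^ 2 * QF a p η η) + 1 / (2 * l) * QF a p ξ ξ) * (2 * l)
        = l ^ 2 * s ^ 2 * QF a p η η + QF a p ξ ξ := by field_simp
    rw [this]; nlinarith
  exact le_of_mul_le_mul_right h2 (by positivity)

lemma WS_scale {n : ℕ} {a : Fin n → Fin n → Pt n → ℝ} {q κ m : ℝ} {w : Pt n → ℝ}
    (hw : ContDiffOn ℝ 1 w (halfSpace n)) (hpos : ∀ p ∈ halfSpace n, 0 ≤ w p) (hm : 0 < m)
    (hws : WS a q κ w) : WS a q (κ / m ^ (q - 1)) (fun p => m * w p) := by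
  intro φ hφ
  have h1 := mul_nonneg hm.le (hws φ hφ)
  rw [← integral_const_mul] at h1
  refine h1.trans (le_of_eq (setIntegral_congr_fun (measurableSet_halfSpace n) fun p hp => ?_))
  have hd : DifferentiableAt ℝ w p :=
    (hw.differentiableOn one_ne_zero).differentiableAt ((isOpen_halfSpace n).mem_nhds hp)
  have e : ∀ v, fderiv ℝ (fun p => m * w p) p v = m * fderiv ℝ w p v := by
    intro v; rw [fderiv_const_mul hd]; rfl
  have e1 : pdT (fun p => m * w p) p = m * pdT w p := e _
  have e2 : gr (fun p => m * w p) p = fun i => m * gr w p i := by funext i; exact e _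
  have e3 : QF a p (gr φ p) (fun i => m * gr w p i) = m * QF a p (gr φ p) (gr w p) := by
    simp only [QF, Finset.mul_sum]
    exact Finset.sum_congr rfl fun i _ => Finset.sum_congr rfl fun j _ => by ring
  simp only
  rw [e1, e2, e3, Real.mul_rpow hm.le (hpos p hp), Real.rpow_sub_one hm.ne']
  have : 0 < m ^ q := Real.rpow_pos_of_pos hm _
  field_simp

/-! ### The cutoff functions -/

lemma exists_deriv_bound : ∃ M : ℝ, 0 < M ∧ ∀ x, |deriv smoothTransition x| ≤ M := by
  have hc : Continuous (deriv smoothTransition) :=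
    (smoothTransition.contDiff (n := 1)).continuous_deriv (by norm_num)
  obtain ⟨M, hM⟩ := (isCompact_Icc (a := (0 : ℝ)) (b := 1)).exists_bound_of_continuousOn
    hc.continuousOn
  refine ⟨max M 1, by positivity, fun x => ?_⟩
  by_cases hx : x ∈ Set.Icc (0 : ℝ) 1
  · exact (hM x hx).trans (le_max_left _ _)
  · have : deriv smoothTransition x = 0 := by
      rw [Set.mem_Icc, not_and_or, not_le, not_le] at hx
      rcases hx with h | h
      · have : IsLocalMin smoothTransition x := Filter.Eventually.of_forall fun y => by
          rw [smoothTransition.zero_of_nonpos h.le]; exact smoothTransition.nonneg y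
        exact this.deriv_eq_zero
      · have : IsLocalMax smoothTransition x := Filter.Eventually.of_forall fun y => by
          rw [smoothTransition.one_of_one_le h.le]; exact smoothTransition.le_one y
        exact this.deriv_eq_zero
    rw [this]; simp

lemma deriv_st_zero_of_nonpos {x : ℝ} (h : x ≤ 0) : deriv smoothTransition x = 0 := by
  have : IsLocalMin smoothTransition x := Filter.Eventually.of_forall fun y => by
    rw [smoothTransition.zero_of_nonpos h]; exact smoothTransition.nonneg y
  exact this.deriv_eq_zero

lemma deriv_st_zero_of_one_le {x : ℝ} (h : 1 ≤ x) : deriv smoothTransition x = 0 := by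
  have : IsLocalMax smoothTransition x := Filter.Eventually.of_forall fun y => by
    rw [smoothTransition.one_of_one_le h]; exact smoothTransition.le_one y
  exact this.deriv_eq_zero

lemma hasDerivAt_st (x : ℝ) : HasDerivAt smoothTransition (deriv smoothTransition x) x :=
  ((smoothTransition.contDiff (n := 1)).differentiable (by norm_num) x).hasDerivAt

/-- Initial layer cutoff. -/
def cEta (n : ℕ) (R : ℝ) (p : Pt n) : ℝ := smoothTransition (R * p.1 - 1)

/-- Space-time cutoff. -/
def cChi (n : ℕ) (R T : ℝ) (p : Pt n) : ℝ :=
  smoothTransition (2 - 3 / T * p.1) * smoothTransition (2 - 3 / R ^ 2 * ‖p.2‖ ^ 2)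

/-- The total cutoff. -/
def cPsi (n : ℕ) (R T : ℝ) (N : ℕ) (p : Pt n) : ℝ := cEta n R p * cChi n R T p ^ N

/-- The weight. -/
def cB (n : ℕ) (R T : ℝ) (N : ℕ) (p : Pt n) : ℝ := cEta n R p * cChi n R T p ^ (N - 2)

/-- The region where the cutoff is one. -/
def cS (n : ℕ) (R T : ℝ) : Set (Pt n) := {p | 2 / R ≤ p.1 ∧ p.1 ≤ T / 3 ∧ ‖p.2‖ ≤ R / 2}

/-- A compact set containing the support. -/
def cK (n : ℕ) (R T : ℝ) : Set (Pt n) := Set.Icc (1 / R) T ×ˢ Metric.closedBall 0 R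

lemma cEta_contDiff (n : ℕ) (R : ℝ) : ContDiff ℝ 1 (cEta n R) := by
  unfold cEta
  exact (smoothTransition.contDiff (n := 1)).comp (by fun_prop)

lemma cChi_contDiff (n : ℕ) (R T : ℝ) : ContDiff ℝ 1 (cChi n R T) := by
  unfold cChi
  refine ((smoothTransition.contDiff (n := 1)).comp (by fun_prop)).mul
    ((smoothTransition.contDiff (n := 1)).comp ?_)
  exact contDiff_const.sub (contDiff_const.mul (contDiff_snd.norm_sq ℝ))

lemma cEta_fderiv (n : ℕ) (R : ℝ) (p e : Pt n) :
    fderiv ℝ (cEta n R) p e = deriv smoothTransition (R * p.1 - 1) * (R * e.1) := by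
  have h1 : HasFDerivAt (fun p : Pt n => R * p.1 - 1)
      (R • ContinuousLinearMap.fst ℝ ℝ (Xn n)) p :=
    (hasFDerivAt_fst.const_mul R).sub_const 1
  have h2 := (hasDerivAt_st (R * p.1 - 1)).comp_hasFDerivAt p h1
  have h3 : fderiv ℝ (cEta n R) p = _ := h2.fderiv
  rw [h3]
  simp

lemma cChi_fderiv (n : ℕ) (R T : ℝ) (p e : Pt n) :
    fderiv ℝ (cChi n R T) p e =
      smoothTransition (2 - 3 / T * p.1) * (deriv smoothTransition (2 - 3 / R ^ 2 * ‖p.2‖ ^ 2)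
        * (-(3 / R ^ 2 * (2 * inner ℝ p.2 e.2))))
      + smoothTransition (2 - 3 / R ^ 2 * ‖p.2‖ ^ 2) * (deriv smoothTransition (2 - 3 / T * p.1)
        * (-(3 / T * e.1))) := by
  have h1 : HasFDerivAt (fun p : Pt n => 2 - 3 / T * p.1)
      (-((3 / T) • ContinuousLinearMap.fst ℝ ℝ (Xn n))) p :=
    (hasFDerivAt_fst.const_mul (3 / T)).const_sub 2
  have h2 := (hasDerivAt_st (2 - 3 / T * p.1)).comp_hasFDerivAt p h1
  have h3 : HasFDerivAt (fun p : Pt n => ‖p.2‖ ^ 2)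
      (2 • (innerSL ℝ p.2).comp (ContinuousLinearMap.snd ℝ ℝ (Xn n))) p :=
    HasFDerivAt.norm_sq (f := fun p : Pt n => p.2) hasFDerivAt_snd
  have h4 : HasFDerivAt (fun p : Pt n => 2 - 3 / R ^ 2 * ‖p.2‖ ^ 2) _ p :=
    (h3.const_mul (3 / R ^ 2)).const_sub 2
  have h5 := (hasDerivAt_st (2 - 3 / R ^ 2 * ‖p.2‖ ^ 2)).comp_hasFDerivAt p h4
  have h6 : fderiv ℝ (cChi n R T) p = _ := (h2.mul h5).fderiv
  rw [h6]
  simp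

lemma cPsi_fderiv (n : ℕ) (R T : ℝ) (N : ℕ) (p e : Pt n) :
    fderiv ℝ (cPsi n R T N) p e = cEta n R p * (N * cChi n R T p ^ (N - 1)
      * fderiv ℝ (cChi n R T) p e) + cChi n R T p ^ N * fderiv ℝ (cEta n R) p e := by
  have h1 := ((cEta_contDiff n R).differentiable one_ne_zero p).hasFDerivAt
  have h2 := (((cChi_contDiff n R T).differentiable one_ne_zero p).hasFDerivAt).pow N
  have h3 : fderiv ℝ (cPsi n R T N) p = _ := (h1.mul h2).fderiv
  rw [h3]
  simp

lemma cEta_nonneg (n : ℕ) (R : ℝ) (p : Pt n) : 0 ≤ cEta n R p := smoothTransition.nonneg _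
lemma cEta_le_one (n : ℕ) (R : ℝ) (p : Pt n) : cEta n R p ≤ 1 := smoothTransition.le_one _
lemma cChi_nonneg (n : ℕ) (R T : ℝ) (p : Pt n) : 0 ≤ cChi n R T p :=
  mul_nonneg (smoothTransition.nonneg _) (smoothTransition.nonneg _)
lemma cChi_le_one (n : ℕ) (R T : ℝ) (p : Pt n) : cChi n R T p ≤ 1 :=
  mul_le_one₀ (smoothTransition.le_one _) (smoothTransition.nonneg _) (smoothTransition.le_one _)

lemma cK_compact (n : ℕ) (R T : ℝ) : IsCompact (cK n R T) :=
  isCompact_Icc.prod (isCompact_closedBall _ _)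

lemma cut_vanish {n : ℕ} {R T : ℝ} (hR : 0 < R) (hT : 0 < T) {p : Pt n} (hp : p ∉ cK n R T) :
    cEta n R p = 0 ∨ cChi n R T p = 0 := by
  by_contra h
  rw [not_or] at h
  obtain ⟨h1, h2⟩ := h
  have h3 : smoothTransition (2 - 3 / T * p.1) ≠ 0 := fun h => h2 (by simp [cChi, h])
  have h4 : smoothTransition (2 - 3 / R ^ 2 * ‖p.2‖ ^ 2) ≠ 0 := fun h => h2 (by simp [cChi, h])
  have g1 : 0 < R * p.1 - 1 := by
    by_contra hh; exact h1 (smoothTransition.zero_of_nonpos (not_lt.mp hh))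
  have g2 : 0 < 2 - 3 / T * p.1 := by
    by_contra hh; exact h3 (smoothTransition.zero_of_nonpos (not_lt.mp hh))
  have g3 : 0 < 2 - 3 / R ^ 2 * ‖p.2‖ ^ 2 := by
    by_contra hh; exact h4 (smoothTransition.zero_of_nonpos (not_lt.mp hh))
  apply hp
  refine ⟨⟨?_, ?_⟩, ?_⟩
  · rw [div_le_iff₀ hR]; linarith
  · have : 3 / T * p.1 < 2 := by linarith
    rw [div_mul_eq_mul_div, div_lt_iff₀ hT] at this
    linarith
  · have : 3 / R ^ 2 * ‖p.2‖ ^ 2 < 2 := by linarith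
    rw [div_mul_eq_mul_div, div_lt_iff₀ (by positivity)] at this
    rw [mem_closedBall_zero_iff]
    exact abs_le_of_sq_le_sq' (by nlinarith [sq_nonneg R]) hR.le |>.2

lemma cPsi_eq_one {n : ℕ} {R T : ℝ} {N : ℕ} (hR : 0 < R) (hT : 0 < T) {p : Pt n}
    (hp : p ∈ cS n R T) : cPsi n R T N p = 1 := by
  obtain ⟨h1, h2, h3⟩ := hp
  have e1 : cEta n R p = 1 := by
    refine smoothTransition.one_of_one_le ?_
    rw [div_le_iff₀ hR] at h1; linarith
  have e2 : smoothTransition (2 - 3 / T * p.1) = 1 := by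
    refine smoothTransition.one_of_one_le ?_
    have : 3 / T * p.1 ≤ 1 := by
      rw [div_mul_eq_mul_div, div_le_iff₀ hT]; linarith
    linarith
  have e3 : smoothTransition (2 - 3 / R ^ 2 * ‖p.2‖ ^ 2) = 1 := by
    refine smoothTransition.one_of_one_le ?_
    have : 3 / R ^ 2 * ‖p.2‖ ^ 2 ≤ 1 := by
      rw [div_mul_eq_mul_div, div_le_iff₀ (by positivity)]
      nlinarith [norm_nonneg p.2]
    linarith
  simp [cPsi, cChi, e1, e2, e3]

lemma cS_measurable (n : ℕ) (R T : ℝ) : MeasurableSet (cS n R T) := by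
  have : IsClosed (cS n R T) :=
    (isClosed_le continuous_const continuous_fst).inter
      ((isClosed_le continuous_fst continuous_const).inter
        (isClosed_le continuous_snd.norm continuous_const))
  exact this.measurableSet

lemma cK_volume {n : ℕ} {R T : ℝ} (hR : 0 < R) (hT : 0 < T) :
    volume.real (cK n R T) ≤ T * (R ^ n * volume.real (Metric.ball (0 : Xn n) 1)) := by
  have h1 : (volume : Measure (Pt n)) (cK n R T)
      = volume (Set.Icc (1 / R) T) * volume (Metric.closedBall (0 : Xn n) R) := by
    rw [cK, Measure.volume_eq_prod, Measure.prod_prod]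
  have h2 := Measure.addHaar_closedBall (volume : Measure (Xn n)) 0 hR.le
  rw [finrank_euclideanSpace_fin] at h2
  rw [Measure.real, h1, h2, Real.volume_Icc, ENNReal.toReal_mul, ENNReal.toReal_mul,
    ENNReal.toReal_ofReal (pow_nonneg hR.le n)]
  refine mul_le_mul_of_nonneg_right ?_ (mul_nonneg (pow_nonneg hR.le n) ENNReal.toReal_nonneg)
  rw [ENNReal.toReal_ofReal']
  have : 0 < 1 / R := by positivity
  exact max_le (by linarith) hT.le

lemma cut_exists {n : ℕ} {a : Fin n → Fin n → Pt n → ℝ} {A : Pt n → ℝ} {α c M : ℝ} {N : ℕ}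
    (hN : 3 ≤ N) (hc : 0 < c) (hM : 0 < M) (hMb : ∀ x, |deriv smoothTransition x| ≤ M)
    (hform : ∀ᵐ p ∂(volume.restrict (halfSpace n)), ∀ ξ : Xn n,
      0 ≤ ∑ i, ∑ j, a i j p * ξ i * ξ j ∧
      ∑ i, ∑ j, a i j p * ξ i * ξ j ≤ A p * ‖ξ‖ ^ 2)
    (hcond8 : Cond8 A α c) {R : ℝ} (hR : 1 < R) :
    Cut a N (3 * N * M + 36 * c * M ^ 2) (R ^ α) (cS n R (R ^ α))ᶜ (cK n R (R ^ α))
      (cPsi n R (R ^ α) N) (cB n R (R ^ α) N) (cChi n R (R ^ α)) (gr (cChi n R (R ^ α))) := by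
  have hR0 : 0 < R := by linarith
  have hT : 0 < R ^ α := Real.rpow_pos_of_pos hR0 _
  have hNp : (0 : ℝ) < N := by exact_mod_cast (by omega : 0 < N)
  set T := R ^ α with hTdef
  have hKS : cK n R T ⊆ halfSpace n := by
    rintro p ⟨⟨h1, -⟩, -⟩
    exact lt_of_lt_of_le (by positivity) h1
  have hB0 : ∀ p, p ∉ cK n R T → cB n R T N p = 0 := by
    intro p hp
    rcases cut_vanish hR0 hT hp with h | h
    · simp [cB, h]
    · simp [cB, h, show N - 2 ≠ 0 by omega]
  have hψb : ∀ p, cPsi n R T N p = cB n R T N p * cChi n R T p ^ 2 := by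
    intro p
    rw [cPsi, cB, mul_assoc, ← pow_add]
    congr 2; omega
  have hts : tsupport (cPsi n R T N) ⊆ cK n R T :=
    closure_minimal (fun p hp => by
      by_contra h
      exact hp (by rw [hψb, hB0 p h, zero_mul])) (cK_compact n R T).isClosed
  have hpowsub : ∀ x : ℝ, x ^ (N - 1) = x ^ (N - 2) * x := by
    intro x; rw [← pow_succ]; congr 1; omega
  refine ⟨⟨?_, ?_, hts.trans hKS, ?_⟩, cK_compact n R T, hKS, (cS_measurable n R T).compl, ?_, ?_,
    hB0, cChi_nonneg n R T, cChi_le_one n R T, ?_, hψb, ?_, ?_, ?_⟩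
  · exact (cEta_contDiff n R).mul ((cChi_contDiff n R T).pow N)
  · exact (cK_compact n R T).of_isClosed_subset (isClosed_tsupport _) hts
  · exact fun p => mul_nonneg (cEta_nonneg n R p) (pow_nonneg (cChi_nonneg n R T p) _)
  · exact LB.of_continuousOn (((cEta_contDiff n R).continuous.mul
      ((cChi_contDiff n R T).continuous.pow _)).continuousOn)
  · exact fun p => mul_nonneg (cEta_nonneg n R p) (pow_nonneg (cChi_nonneg n R T p) _)
  · intro p
    exact mul_le_of_le_one_left (pow_nonneg (cChi_nonneg n R T p) _) (cEta_le_one n R p)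
  · intro p _ i
    simp only [gr, pdX]
    rw [cPsi_fderiv, cEta_fderiv, hpowsub, cB]
    simp only
    ring
  · intro p _
    simp only [pdT]
    rw [cPsi_fderiv, cEta_fderiv, cChi_fderiv, hpowsub]
    simp only [inner_zero_right, mul_zero, neg_zero, zero_add, mul_one]
    have hη := cEta_nonneg n R p
    have hχ := cChi_nonneg n R T p
    have hχ1 := cChi_le_one n R T p
    have hd1 : 0 ≤ deriv smoothTransition (R * p.1 - 1) := smoothTransition.monotone.deriv_nonneg
    have hg0 := smoothTransition.nonneg (2 - 3 / R ^ 2 * ‖p.2‖ ^ 2)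
    have hg1 := smoothTransition.le_one (2 - 3 / R ^ 2 * ‖p.2‖ ^ 2)
    have q1 : 0 ≤ cChi n R T p ^ N * (deriv smoothTransition (R * p.1 - 1) * R) := by positivity
    have hB : 0 ≤ cB n R T N p :=
      mul_nonneg (cEta_nonneg n R p) (pow_nonneg (cChi_nonneg n R T p) _)
    have hk : 0 ≤ (3 * N * M + 36 * c * M ^ 2) / T * cB n R T N p := by positivity
    by_cases hp : p ∈ (cS n R T)ᶜ
    · have hi : ind (cS n R T)ᶜ p = 1 := by simp [ind, Set.indicator_of_mem hp]
      rw [hi, mul_one]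
      have q2 : smoothTransition (2 - 3 / R ^ 2 * ‖p.2‖ ^ 2)
          * deriv smoothTransition (2 - 3 / T * p.1) ≤ M := by
        have := (le_abs_self _).trans (hMb (2 - 3 / T * p.1))
        nlinarith
      have q3 : cEta n R p * cChi n R T p ^ (N - 2) = cB n R T N p := rfl
      have q4 : 0 ≤ cB n R T N p * (N * (3 / T)) := by positivity
      have q5 : cChi n R T p * (smoothTransition (2 - 3 / R ^ 2 * ‖p.2‖ ^ 2)
          * deriv smoothTransition (2 - 3 / T * p.1)) ≤ M := by nlinarith
      have q6 := mul_le_mul_of_nonneg_left q5 q4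
      have q7 : cB n R T N p * (N * (3 / T)) * M ≤
          (3 * N * M + 36 * c * M ^ 2) / T * cB n R T N p := by
        have : (3 * N * M + 36 * c * M ^ 2) / T * cB n R T N p
          = cB n R T N p * (N * (3 / T)) * M + 36 * c * M ^ 2 / T * cB n R T N p := by ring
        rw [this]
        have : 0 ≤ 36 * c * M ^ 2 / T * cB n R T N p := by positivity
        linarith
      refine le_trans ?_ (q6.trans q7)
      rw [← q3]
      linarith
    · have hd : deriv smoothTransition (2 - 3 / T * p.1) = 0 ∨ False := by
        left
        have hp' : p ∈ cS n R T := by simpa using hp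
        refine deriv_st_zero_of_one_le ?_
        have : 3 / T * p.1 ≤ 1 := by
          rw [div_mul_eq_mul_div, div_le_iff₀ hT]; linarith [hp'.2.1]
        linarith
      rw [hd.resolve_right id]
      have hi : ind (cS n R T)ᶜ p = 0 := by simp [ind, Set.indicator_of_notMem hp]
      rw [hi]
      linarith
  · have hm : MeasurableSet {p : Pt n | 0 < p.1 ∧ R / 2 < ‖p.2‖ ∧ ‖p.2‖ < R} := by
      have : IsOpen {p : Pt n | 0 < p.1 ∧ R / 2 < ‖p.2‖ ∧ ‖p.2‖ < R} :=
        (isOpen_lt continuous_const continuous_fst).inter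
          ((isOpen_lt continuous_const continuous_snd.norm).inter
            (isOpen_lt continuous_snd.norm continuous_const))
      exact this.measurableSet
    have h8 := ae_restrict_of_ae (s := halfSpace n) ((ae_restrict_iff' hm).mp (hcond8 R hR))
    filter_upwards [hform, h8, ae_restrict_mem (measurableSet_halfSpace n)] with p hf h8 hp
    have hk : 0 ≤ (3 * N * M + 36 * c * M ^ 2) / T := by positivity
    set s : ℝ := smoothTransition (2 - 3 / T * p.1)
      * (deriv smoothTransition (2 - 3 / R ^ 2 * ‖p.2‖ ^ 2) * (-(6 / R ^ 2))) with hs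
    have hgr : gr (cChi n R T) p = fun i => s * p.2 i := by
      funext i
      simp only [gr, pdX]
      rw [cChi_fderiv]
      simp only [EuclideanSpace.inner_single_right, hs]
      simp
      ring
    by_cases hx : R / 2 < ‖p.2‖ ∧ ‖p.2‖ < R
    · have hAp := h8 ⟨hp, hx⟩
      have hpD : p ∈ (cS n R T)ᶜ := fun h => absurd h.2.2 (not_le.mpr hx.1)
      have hi : ind (cS n R T)ᶜ p = 1 := by simp [ind, Set.indicator_of_mem hpD]
      rw [hi, mul_one]
      have e1 := (hf (s • p.2)).2
      have e2 : QF a p (gr (cChi n R T) p) (gr (cChi n R T) p)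
        = ∑ i, ∑ j, a i j p * (s • p.2) i * (s • p.2) j := by rw [hgr]; rfl
      rw [e2]
      refine e1.trans ?_
      have hs1 : |s| ≤ M * (6 / R ^ 2) := by
        rw [hs, abs_mul, abs_mul, abs_neg, abs_of_nonneg (smoothTransition.nonneg _),
          abs_of_pos (by positivity : 0 < 6 / R ^ 2)]
        have f1 := smoothTransition.le_one (2 - 3 / T * p.1)
        have f0 := smoothTransition.nonneg (2 - 3 / T * p.1)
        have f2 := hMb (2 - 3 / R ^ 2 * ‖p.2‖ ^ 2)
        calc _ ≤ 1 * (M * (6 / R ^ 2)) := by gcongr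
          _ = _ := one_mul _
      have hn : ‖s • p.2‖ ≤ 6 * M / R := by
        rw [norm_smul, Real.norm_eq_abs]
        calc |s| * ‖p.2‖ ≤ M * (6 / R ^ 2) * R := by
              have := hx.2.le; gcongr
          _ = 6 * M / R := by field_simp
      have hn2 : ‖s • p.2‖ ^ 2 ≤ (6 * M / R) ^ 2 := by gcongr
      calc A p * ‖s • p.2‖ ^ 2 ≤ c * R ^ (2 - α) * (6 * M / R) ^ 2 := by gcongr
        _ = 36 * c * M ^ 2 / T := by
            rw [Real.rpow_sub hR0, Real.rpow_two, ← hTdef]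
            field_simp
            ring
        _ ≤ _ := by
            refine div_le_div_of_nonneg_right ?_ hT.le
            have : 0 ≤ 3 * N * M := by positivity
            linarith
    · have hd : deriv smoothTransition (2 - 3 / R ^ 2 * ‖p.2‖ ^ 2) = 0 := by
        rw [not_and_or, not_lt, not_lt] at hx
        rcases hx with hx | hx
        · refine deriv_st_zero_of_one_le ?_
          have : 3 / R ^ 2 * ‖p.2‖ ^ 2 ≤ 1 := by
            rw [div_mul_eq_mul_div, div_le_iff₀ (by positivity)]
            nlinarith [norm_nonneg p.2]
          linarith
        · refine deriv_st_zero_of_nonpos ?_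
          have : 3 ≤ 3 / R ^ 2 * ‖p.2‖ ^ 2 := by
            rw [div_mul_eq_mul_div, le_div_iff₀ (by positivity)]
            nlinarith [norm_nonneg p.2]
          linarith
      have hs0 : s = 0 := by rw [hs, hd]; ring
      have e2 : QF a p (gr (cChi n R T) p) (gr (cChi n R T) p) = 0 := by
        rw [hgr, hs0]; simp [QF]
      rw [e2]
      exact mul_nonneg hk (ind_nonneg _ _)

lemma Cond8.mono {n : ℕ} {A : Pt n → ℝ} {α β c : ℝ} (hc : 0 < c) (h : Cond8 A α c) (hβ : β ≤ α) :
    Cond8 A β c := by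
  intro R hR
  filter_upwards [h R hR] with p hp
  refine hp.trans (mul_le_mul_of_nonneg_left ?_ hc.le)
  exact Real.rpow_le_rpow_of_exponent_le hR.le (by linarith)


lemma ind_of_mem {n : ℕ} {D : Set (Pt n)} {p : Pt n} (hp : p ∈ D) : ind D p = 1 := by
  simp [ind, hp]

lemma ind_of_notMem {n : ℕ} {D : Set (Pt n)} {p : Pt n} (hp : p ∉ D) : ind D p = 0 := by
  simp [ind, hp]

/-- First pass: a scale invariant bound for the mass. -/
lemma pass_one {q ν C k : ℝ} (hq : 1 < q) (hν : 0 < ν) (hν1 : ν < 1) (hνq : 1 + ν < q) (hC : 0 < C)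
    (hk : 0 < k) {N : ℕ} (hN0 : 0 < N) (hN : 2 * (1 - ν) / (q - 1) ≤ (N - 2 : ℕ))
    (hN1 : 2 * 1 / (q - 1) ≤ (N - 2 : ℕ)) (hN2 : 2 * (1 + ν) / (q - (1 + ν)) ≤ (N - 2 : ℕ)) :
    ∃ K3, 0 ≤ K3 ∧ ∀ {n : ℕ} {a : Fin n → Fin n → Pt n → ℝ} {T : ℝ} {D K : Set (Pt n)}
    {ψ b χ : Pt n → ℝ} {z : Pt n → Fin n → ℝ} {h : Pt n → ℝ},
    0 < T → Cut a N k T D K ψ b χ z → (∀ i j, LB (a i j)) → FormOK a →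
    ContDiffOn ℝ 1 h (halfSpace n) → (∀ p ∈ halfSpace n, 0 ≤ h p) → WS a q (C / T) h →
    ∫ p in halfSpace n, h p ^ q * ψ p ≤ K3 * volume.real K := by
  have hNp : (0 : ℝ) < N := by exact_mod_cast hN0
  obtain ⟨K1, hK1, E⟩ := energy_est hq hν hν1 hC hk hN0 hN
  have hL : 0 < k * ((N : ℝ) ^ 2 / (4 * 1)) := by positivity
  obtain ⟨Ka, hKa, Ya⟩ := young2 (p := 1) (q := q) (s := 0) (N := N) one_pos (by linarith)
    (by linarith) (by rw [add_zero]; exact hN1) hk (by positivity : 0 < C / 4)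
  obtain ⟨Kb, hKb, Yb⟩ := young2 (p := 1 + ν) (q := q) (s := 0) (N := N) (by linarith) (by linarith)
    (by linarith) (by rw [add_zero]; exact hN2) hL (by positivity : 0 < C / 4)
  refine ⟨2 / C * (K1 + Ka + Kb), by positivity, ?_⟩
  intro n a T D K ψ b χ z h hT hcut ha hform hh hpos hws
  have hE := E hT hcut ha hform hh hpos hws one_pos le_rfl
  have I1 : IntegrableOn (fun p => h p ^ q * ψ p) (halfSpace n) :=
    hcut.integrable ((LB.rpow hh (by linarith)).mul hcut.psiL)
      (fun p hp => by simp [hcut.psi_zero p hp])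
  have I2 : IntegrableOn (ind K) (halfSpace n) :=
    hcut.integrable (LB.ind hcut.hK.measurableSet) (fun p hp => ind_of_notMem hp)
  have M := mass_est hq hC hN0 hT hcut ha hform hh hpos hws one_pos one_pos hE
    (F := fun p => C / 2 * (h p ^ q * ψ p) + (Ka + Kb) * ind K p)
    ((I1.const_mul _).add (I2.const_mul _)) (by
      intro p hp
      have hb := hcut.hb0 p
      have hhp := hpos p hp
      by_cases hpK : p ∈ K
      · have ya := Ya (h p) 1 (χ p) (b p) hhp one_pos le_rfl (hcut.hχ0 p) (hcut.hχ1 p) hb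
          (hcut.hbχ p)
        have yb := Yb (h p) 1 (χ p) (b p) hhp one_pos le_rfl (hcut.hχ0 p) (hcut.hχ1 p) hb
          (hcut.hbχ p)
        rw [Real.rpow_zero, one_mul, ← hcut.hψ p] at ya yb
        rw [Real.rpow_one] at ya
        rw [ind_of_mem hpK]
        have hX : 0 ≤ k * ((h p + 1) + N ^ 2 / (4 * 1) * (h p + 1) ^ (1 + ν)) * b p := by
          have : 0 ≤ (h p + 1) ^ (1 + ν) := Real.rpow_nonneg (by linarith) _
          positivity
        have := mul_le_of_le_one_right hX (ind_le_one D p)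
        nlinarith
      · simp [hcut.hbK p hpK, hcut.psi_zero p hpK, ind_of_notMem hpK])
  rw [integral_add (I1.const_mul _) (I2.const_mul _), integral_const_mul, integral_const_mul,
    hcut.integral_ind] at M
  rw [div_mul_eq_mul_div, div_mul_eq_mul_div, le_div_iff₀ hC]
  nlinarith

/-- Second pass: an absorption estimate using only the mass in the transition region. -/
lemma pass_two {q ν C k : ℝ} (hq : 1 < q) (hν : 0 < ν) (hν1 : ν < 1) (hνq : 1 + ν < q) (hC : 0 < C)
    (hk : 0 < k) {N : ℕ} (hN0 : 0 < N) (hN : 2 * (1 - ν) / (q - 1) ≤ (N - 2 : ℕ)) :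
    ∃ K1, 0 ≤ K1 ∧ ∀ ε, 0 < ε → ∃ C', 0 ≤ C' ∧
    ∀ {n : ℕ} {a : Fin n → Fin n → Pt n → ℝ} {T : ℝ} {D K : Set (Pt n)}
    {ψ b χ : Pt n → ℝ} {z : Pt n → Fin n → ℝ} {h : Pt n → ℝ},
    0 < T → Cut a N k T D K ψ b χ z → (∀ i j, LB (a i j)) → FormOK a →
    ContDiffOn ℝ 1 h (halfSpace n) → (∀ p ∈ halfSpace n, 0 ≤ h p) → WS a q (C / T) h →
    IntegrableOn (fun p => h p ^ q) (halfSpace n) →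
    C * ∫ p in halfSpace n, h p ^ q * ψ p ≤ ε * (K1 + 1) * volume.real K
      + C' * ∫ p in halfSpace n, ind D p * h p ^ q := by
  have hNp : (0 : ℝ) < N := by exact_mod_cast hN0
  obtain ⟨K1, hK1, E⟩ := energy_est hq hν hν1 hC hk hN0 hN
  refine ⟨K1, hK1, fun ε hε => ?_⟩
  obtain ⟨d, C', hd, hd1, hC', Y⟩ := young3 (L := (N : ℝ) ^ 2 / (4 * ε)) hν hνq hk
    (by positivity) hε
  refine ⟨C', hC', ?_⟩
  intro n a T D K ψ b χ z h hT hcut ha hform hh hpos hws hIntg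
  have hE := E hT hcut ha hform hh hpos hws hd hd1
  have I1 : IntegrableOn (fun p => ind D p * h p ^ q) (halfSpace n) := by
    refine (hIntg.indicator hcut.hD).congr (Filter.Eventually.of_forall fun p => ?_)
    by_cases hp : p ∈ D <;> simp [ind, hp]
  have I2 : IntegrableOn (ind K) (halfSpace n) :=
    hcut.integrable (LB.ind hcut.hK.measurableSet) (fun p hp => ind_of_notMem hp)
  have M := mass_est hq hC hN0 hT hcut ha hform hh hpos hws hd hε hE
    (F := fun p => ε * ind K p + C' * (ind D p * h p ^ q))
    ((I2.const_mul _).add (I1.const_mul _)) (by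
      intro p hp
      have hb := hcut.hb0 p
      have hhp := hpos p hp
      have hhq : 0 ≤ h p ^ q := Real.rpow_nonneg hhp _
      have hD0 := ind_nonneg D p
      by_cases hpK : p ∈ K
      · have y := Y (h p) hhp
        have hX : 0 ≤ k * ((h p + d) + N ^ 2 / (4 * ε) * (h p + d) ^ (1 + ν)) := by
          have : 0 ≤ (h p + d) ^ (1 + ν) := Real.rpow_nonneg (by linarith) _
          positivity
        have h1 := mul_le_of_le_one_right hX (hcut.b_le_one p)
        have h2 := mul_le_mul_of_nonneg_right (h1.trans y) hD0
        rw [ind_of_mem hpK]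
        nlinarith [ind_le_one D p]
      · rw [hcut.hbK p hpK, ind_of_notMem hpK]
        simp only [mul_zero, zero_mul, zero_add]
        positivity)
  rw [integral_add (I2.const_mul _) (I1.const_mul _), integral_const_mul, integral_const_mul,
    hcut.integral_ind] at M
  linarith


lemma cS_cover (n : ℕ) {β : ℝ} (hβ : 0 < β) :
    AECover (volume.restrict (halfSpace n)) Filter.atTop (fun R : ℝ => cS n R (R ^ β)) := by
  refine ⟨?_, fun R => cS_measurable n R _⟩
  filter_upwards [ae_restrict_mem (measurableSet_halfSpace n)] with p hp
  have hp' : 0 < p.1 := hp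
  have h1 : ∀ᶠ R : ℝ in Filter.atTop, 3 * p.1 ≤ R ^ β :=
    (tendsto_rpow_atTop hβ).eventually_ge_atTop _
  filter_upwards [h1, Filter.eventually_ge_atTop (2 / p.1), Filter.eventually_ge_atTop (2 * ‖p.2‖),
    Filter.eventually_gt_atTop 0] with R a b c d
  refine ⟨?_, by linarith, by linarith⟩
  rw [div_le_iff₀ d]
  rw [div_le_iff₀ hp'] at b
  linarith

lemma cS_sub {n : ℕ} {R T : ℝ} (hR : 0 < R) : cS n R T ⊆ halfSpace n := fun p hp =>
  lt_of_lt_of_le (by positivity : (0 : ℝ) < 2 / R) hp.1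

lemma core_zero {n : ℕ} (hn : 1 ≤ n) {c q C : ℝ} (hc : 0 < c) (hq : 1 < q) (hC : 0 < C)
    {a : Fin n → Fin n → Pt n → ℝ} {A : Pt n → ℝ} (ha : ∀ i j, LB (a i j)) (hfo : FormOK a)
    (hform : ∀ᵐ p ∂(volume.restrict (halfSpace n)), ∀ ξ : Xn n,
      0 ≤ ∑ i, ∑ j, a i j p * ξ i * ξ j ∧
      ∑ i, ∑ j, a i j p * ξ i * ξ j ≤ A p * ‖ξ‖ ^ 2)
    (hcond8 : Cond8 A (n * (q - 1)) c) {w : Pt n → ℝ} (hw : ContDiffOn ℝ 1 w (halfSpace n))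
    (hpos : ∀ p ∈ halfSpace n, 0 ≤ w p) (hws : WS a q C w) : ∀ p ∈ halfSpace n, w p = 0 := by
  have hnp : (0 : ℝ) < n := by exact_mod_cast hn
  have hβ : 0 < n * (q - 1) := mul_pos hnp (by linarith)
  set β := n * (q - 1) with hβdef
  obtain ⟨M, hM, hMb⟩ := exists_deriv_bound
  obtain ⟨ν, hν, hν1, hνq⟩ : ∃ ν : ℝ, 0 < ν ∧ ν < 1 ∧ 1 + ν < q :=
    ⟨min (1 / 2) ((q - 1) / 2), lt_min (by norm_num) (by linarith),
      (min_le_left _ _).trans_lt (by norm_num),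
      by linarith [min_le_right (1 / 2) ((q - 1) / 2)]⟩
  obtain ⟨N0, hN0⟩ := exists_nat_ge (max (2 * (1 - ν) / (q - 1))
    (max (2 * 1 / (q - 1)) (2 * (1 + ν) / (q - (1 + ν)))))
  set N := N0 + 3 with hNdef
  have hN : max (2 * (1 - ν) / (q - 1)) (max (2 * 1 / (q - 1)) (2 * (1 + ν) / (q - (1 + ν))))
      ≤ ((N - 2 : ℕ) : ℝ) := hN0.trans (by exact_mod_cast (by omega : N0 ≤ N - 2))
  have hN1 := (le_max_left _ _).trans hN
  have hN2 := ((le_max_left _ _).trans (le_max_right _ _)).trans hN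
  have hN3 := ((le_max_right _ _).trans (le_max_right _ _)).trans hN
  have hNpos : 0 < N := by omega
  have hNr : (0 : ℝ) < N := by exact_mod_cast hNpos
  have hk : 0 < 3 * N * M + 36 * c * M ^ 2 := by positivity
  set k := 3 * N * M + 36 * c * M ^ 2 with hkdef
  obtain ⟨K3, hK3, P1⟩ := pass_one hq hν hν1 hνq hC hk hNpos hN1 hN2 hN3
  obtain ⟨K1, hK1, P2⟩ := pass_two hq hν hν1 hνq hC hk hNpos hN1
  set V := volume.real (Metric.ball (0 : Xn n) 1) with hV
  have hV0 : 0 ≤ V := measureReal_nonneg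
  have hcut : ∀ R : ℝ, 1 < R → Cut a N k (R ^ β) (cS n R (R ^ β))ᶜ (cK n R (R ^ β))
      (cPsi n R (R ^ β) N) (cB n R (R ^ β) N) (cChi n R (R ^ β)) (gr (cChi n R (R ^ β))) :=
    fun R hR => cut_exists (by omega) hc hM hMb hform hcond8 hR
  have hTp : ∀ R : ℝ, 1 < R → 0 < R ^ β := fun R hR => Real.rpow_pos_of_pos (by linarith) _
  have hmp : ∀ R : ℝ, 1 < R → 0 < R ^ n := fun R hR => pow_pos (by linarith) _
  have hmT : ∀ R : ℝ, 1 < R → (R ^ n) ^ (q - 1) = R ^ β := fun R hR => by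
    rw [hβdef, Real.rpow_mul (by linarith), Real.rpow_natCast]
  have hmq : ∀ R : ℝ, 1 < R → (R ^ n) ^ q = R ^ n * R ^ β := fun R hR => by
    rw [← hmT R hR, ← Real.rpow_one_add' (hmp R hR).le (by linarith)]
    congr 1; ring
  have hW : ∀ R : ℝ, 1 < R → WS a q (C / R ^ β) (fun p => R ^ n * w p) := fun R hR => by
    rw [← hmT R hR]; exact WS_scale hw hpos (hmp R hR) hws
  have hhC : ∀ R : ℝ, ContDiffOn ℝ 1 (fun p => R ^ n * w p) (halfSpace n) := fun R =>
    contDiffOn_const.mul hw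
  have hhp : ∀ R : ℝ, 1 < R → ∀ p ∈ halfSpace n, 0 ≤ R ^ n * w p := fun R hR p hp =>
    mul_nonneg (hmp R hR).le (hpos p hp)
  have hpw : ∀ R : ℝ, 1 < R → ∀ p ∈ halfSpace n,
      (R ^ n * w p) ^ q = R ^ n * R ^ β * w p ^ q := fun R hR p hp => by
    rw [Real.mul_rpow (hmp R hR).le (hpos p hp), hmq R hR]
  have hJ : ∀ R : ℝ, 1 < R → ∫ p in halfSpace n, (R ^ n * w p) ^ q * cPsi n R (R ^ β) N p
      = R ^ n * R ^ β * ∫ p in halfSpace n, w p ^ q * cPsi n R (R ^ β) N p := fun R hR => by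
    rw [← integral_const_mul]
    refine setIntegral_congr_fun (measurableSet_halfSpace n) fun p hp => ?_
    simp only [hpw R hR p hp, mul_assoc]
  have hwq : ∀ p ∈ halfSpace n, 0 ≤ w p ^ q := fun p hp => Real.rpow_nonneg (hpos p hp) _
  have hvol : ∀ R : ℝ, 1 < R → volume.real (cK n R (R ^ β)) ≤ R ^ n * R ^ β * V := fun R hR =>
    (cK_volume (by linarith) (hTp R hR)).trans (le_of_eq (by ring))
  -- the mass inside the core region is controlled by the mass against the cutoff
  have hcore : ∀ R : ℝ, 1 < R → IntegrableOn (fun p => w p ^ q) (cS n R (R ^ β))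
        (volume.restrict (halfSpace n)) ∧
      ∫ p in cS n R (R ^ β), w p ^ q ∂(volume.restrict (halfSpace n))
      ≤ ∫ p in halfSpace n, w p ^ q * cPsi n R (R ^ β) N p := fun R hR => by
    have I1 : IntegrableOn (fun p => w p ^ q * cPsi n R (R ^ β) N p) (halfSpace n) :=
      (hcut R hR).integrable ((LB.rpow hw (by linarith)).mul (hcut R hR).psiL)
        (fun p hp => by simp [(hcut R hR).psi_zero p hp])
    have heq : ∀ p ∈ cS n R (R ^ β), w p ^ q * cPsi n R (R ^ β) N p = w p ^ q := fun p hp => by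
      rw [cPsi_eq_one (by linarith) (hTp R hR) hp, mul_one]
    refine ⟨IntegrableOn.congr_fun (I1.integrable.integrableOn) heq (cS_measurable n R _), ?_⟩
    rw [← setIntegral_congr_fun (cS_measurable n R _) heq]
    refine setIntegral_le_integral I1 ?_
    filter_upwards [ae_restrict_mem (measurableSet_halfSpace n)] with p hp
    exact mul_nonneg (hwq p hp) ((hcut R hR).test.2.2.2 p)
  have hcov := cS_cover n hβ
  have hInt : IntegrableOn (fun p => w p ^ q) (halfSpace n) := by
    have hj : ∀ j : ℕ, 1 < (j : ℝ) + 2 := fun j => by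
      have : (0 : ℝ) ≤ j := Nat.cast_nonneg j
      linarith
    have hcov2 : AECover (volume.restrict (halfSpace n)) Filter.atTop
        (fun j : ℕ => cS n ((j : ℝ) + 2) (((j : ℝ) + 2) ^ β)) :=
      hcov.comp_tendsto (Filter.tendsto_atTop_add_const_right _ _ tendsto_natCast_atTop_atTop)
    refine hcov2.integrable_of_integral_norm_bounded (K3 * V) (fun j => ?_)
      (Filter.Eventually.of_forall fun j => ?_)
    · exact (hcore _ (hj j)).1
    · have hR := hj j
      have h1 := (hcore _ hR).2
      have h2 := P1 (hTp _ hR) (hcut _ hR) ha hfo (hhC _) (hhp _ hR) (hW _ hR)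
      rw [hJ _ hR] at h2
      have h3 := h2.trans (mul_le_mul_of_nonneg_left (hvol _ hR) hK3)
      have h4 : 0 < ((j : ℝ) + 2) ^ n * ((j : ℝ) + 2) ^ β := mul_pos (hmp _ hR) (hTp _ hR)
      have h5 : ∫ p in halfSpace n, w p ^ q *
          cPsi n ((j : ℝ) + 2) (((j : ℝ) + 2) ^ β) N p ≤ K3 * V := by
        refine le_of_mul_le_mul_left ?_ h4
        linarith
      refine le_trans (le_of_eq ?_) (h1.trans h5)
      rw [Measure.restrict_restrict_of_subset (cS_sub (by linarith))]
      refine setIntegral_congr_fun (cS_measurable n _ _) fun p hp => ?_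
      exact Real.norm_of_nonneg (hwq p (cS_sub (by linarith) hp))
  have hlim := hcov.integral_tendsto_of_countably_generated hInt
  set I := ∫ p in halfSpace n, w p ^ q with hI
  have hstep : ∀ ε : ℝ, 0 < ε → C * I ≤ ε * ((K1 + 1) * V) := by
    intro ε hε
    obtain ⟨C', hC', P⟩ := P2 ε hε
    have key : ∀ᶠ R : ℝ in Filter.atTop,
        C * ∫ p in cS n R (R ^ β), w p ^ q ∂(volume.restrict (halfSpace n))
        ≤ ε * ((K1 + 1) * V) + C' * (I - ∫ p in cS n R (R ^ β), w p ^ q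
          ∂(volume.restrict (halfSpace n))) := by
      filter_upwards [Filter.eventually_gt_atTop 1] with R hR
      have hh : IntegrableOn (fun p => (R ^ n * w p) ^ q) (halfSpace n) :=
        IntegrableOn.congr_fun (hInt.const_mul (R ^ n * R ^ β))
          (fun p hp => (hpw R hR p hp).symm) (measurableSet_halfSpace n)
      have h2 := P (hTp _ hR) (hcut _ hR) ha hfo (hhC _) (hhp _ hR) (hW _ hR) hh
      have hD : ∫ p in halfSpace n, ind (cS n R (R ^ β))ᶜ p * (R ^ n * w p) ^ q
          = R ^ n * R ^ β * (I - ∫ p in cS n R (R ^ β), w p ^ q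
          ∂(volume.restrict (halfSpace n))) := by
        have e := integral_add_compl (cS_measurable n R (R ^ β)) hInt.integrable
        rw [← hI] at e
        rw [← e, add_sub_cancel_left, ← integral_indicator (cS_measurable n R (R ^ β)).compl,
          ← integral_const_mul]
        refine setIntegral_congr_fun (measurableSet_halfSpace n) fun p hp => ?_
        simp only [hpw R hR p hp]
        by_cases hpS : p ∈ (cS n R (R ^ β))ᶜ
        · rw [ind_of_mem hpS, Set.indicator_of_mem hpS]; ring
        · rw [ind_of_notMem hpS, Set.indicator_of_notMem hpS]; ring
      rw [hJ R hR, hD] at h2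
      have h4 : 0 < R ^ n * R ^ β := mul_pos (hmp _ hR) (hTp _ hR)
      have h3 := mul_le_mul_of_nonneg_left (hvol R hR) (by positivity : 0 ≤ ε * (K1 + 1))
      have h5 := mul_le_mul_of_nonneg_left (hcore R hR).2 hC.le
      refine h5.trans (le_of_mul_le_mul_left ?_ h4)
      linarith
    have l1 := hlim.const_mul C
    have l2 := ((hlim.const_sub I).const_mul C').const_add (ε * ((K1 + 1) * V))
    have := le_of_tendsto_of_tendsto l1 l2 key
    simpa using this
  have hI0 : 0 ≤ I := setIntegral_nonneg (measurableSet_halfSpace n) hwq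
  have hIz : I = 0 := by
    by_contra hne
    have hIp : 0 < C * I := mul_pos hC (lt_of_le_of_ne hI0 (Ne.symm hne))
    have hB : 0 ≤ (K1 + 1) * V := by positivity
    have := hstep (C * I / (2 * ((K1 + 1) * V + 1))) (by positivity)
    rw [div_mul_eq_mul_div, le_div_iff₀ (by positivity)] at this
    nlinarith
  have hae : (fun p => w p ^ q) =ᵐ[volume.restrict (halfSpace n)] 0 := by
    refine (setIntegral_eq_zero_iff_of_nonneg_ae ?_ hInt).1 hIz
    filter_upwards [ae_restrict_mem (measurableSet_halfSpace n)] with p hp using hwq p hp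
  have hae2 : w =ᵐ[volume.restrict (halfSpace n)] 0 := by
    filter_upwards [hae, ae_restrict_mem (measurableSet_halfSpace n)] with p hp hpS
    exact ((Real.rpow_eq_zero_iff_of_nonneg (hpos p hpS)).1 hp).1
  exact Measure.eqOn_open_of_ae_eq hae2 (isOpen_halfSpace n) hw.continuousOn continuousOn_const

/-- the Fujita comparison principle for the Cauchy problems, with
arbitrary (possibly different) initial data, for a super-solution `u` and a
sub-solution `v` (Theorem 5). -/
theorem fujita_comparison_super_sub
    (n : ℕ) (hn : 1 ≤ n) (α c q : ℝ) (hα : 0 < α) (hc : 0 < c)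
    (hq1 : 1 < q) (hq2 : q ≤ 1 + α / n)
    (a : Fin n → Fin n → Pt n → ℝ) (A : Pt n → ℝ)
    (ha_meas : ∀ i j, Measurable (a i j))
    (ha_locbdd : ∀ i j, ∀ K : Set (Pt n), IsCompact K → K ⊆ halfSpace n →
      ∃ M, ∀ p ∈ K, |a i j p| ≤ M)
    (ha_symm : ∀ i j, ∀ᵐ p ∂(volume.restrict (halfSpace n)), a i j p = a j i p)
    (hA_meas : Measurable A)
    (hA_nonneg : ∀ p, 0 ≤ A p)
    (hA_locbdd : ∀ K : Set (Pt n), IsCompact K → K ⊆ halfSpace n →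
      ∃ M, ∀ p ∈ K, A p ≤ M)
    (hform : ∀ᵐ p ∂(volume.restrict (halfSpace n)), ∀ ξ : Xn n,
      0 ≤ ∑ i, ∑ j, a i j p * ξ i * ξ j ∧
      ∑ i, ∑ j, a i j p * ξ i * ξ j ≤ A p * ‖ξ‖ ^ 2)
    (hcond8 : Cond8 A α c)
    (u v : Pt n → ℝ)
    -- `u` and `v` are continuous on `[0,∞) × ℝⁿ`; the initial data `u(0,·)`
    -- and `v(0,·)` may be different and are unrestricted
    (hu_cont : ContinuousOn u {p : Pt n | 0 ≤ p.1})
    (hv_cont : ContinuousOn v {p : Pt n | 0 ≤ p.1})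
    (hu : ContDiffOn ℝ 1 u (halfSpace n)) (hv : ContDiffOn ℝ 1 v (halfSpace n))
    (hu_int : LocallyIntegrableOn (fun p => |u p| ^ q) (halfSpace n) volume)
    (hv_int : LocallyIntegrableOn (fun p => |v p| ^ q) (halfSpace n) volume)
    (hsupersol : WeakSuperSol a q u)
    (hsubsol : WeakSubSol a q v)
    (huv : ∀ p ∈ halfSpace n, v p ≤ u p) :
    ∀ p ∈ halfSpace n, u p = v p := by
  have hnp : (0 : ℝ) < n := by exact_mod_cast hn
  have ha : ∀ i j, LB (a i j) := fun i j =>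
    ⟨(ha_meas i j).aestronglyMeasurable, ha_locbdd i j⟩
  have hβ : n * (q - 1) ≤ α := by
    have h1 : q - 1 ≤ α / n := by linarith
    rw [le_div_iff₀ hnp] at h1
    linarith
  have hws := WS_of_sol hq1 ha hu hv hsupersol hsubsol huv
  have hz := core_zero hn hc hq1 (Real.rpow_pos_of_pos two_pos (-q)) ha (formOK_of ha_symm hform)
    hform (hcond8.mono hc hβ) (hu.sub hv) (fun p hp => sub_nonneg.2 (huv p hp)) hws
  exact fun p hp => sub_eq_zero.1 (hz p hp)
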